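/- arXiv:1904.09760 — 8 statements merged into one kernel-verified Lean document; each statement's English description precedes it below -/
import Mathlib

section
/- Let $n, l \geq 0$ and $0 \leq k \leq n$ be integers. The determinant of the $(l+1) \times (l+1)$ matrix whose $(i,j)$ entry (for $0 \leq i, j \leq l$) is the binomial coefficient $\binom{n+i+j}{k+j}$ equals $\dfrac{\left(\prod_{m=0}^{l}(n+m)!\right)\left(\prod_{m=0}^{l} m!\right)}{\left(\prod_{m=0}^{l}(k+m)!\right)\left(\prod_{m=0}^{l}(n-k+m)!\right)}$ (in particular this determinant is a positive rational number, hence a positive integer). -/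
open Finset

/-!
Writing each binomial coefficient as a quotient of factorials, one multiplies column `j` of the
rhombus by `(k + j)!` and row `i` by `(n - k + i)!` to obtain the Hankel matrix `(n + i + j)!`.
Dividing row `i` of the latter by `(n + i)!` leaves the rising factorials
`(n + i + 1) ⋯ (n + i + j)`, a monic polynomial of degree `j` in `i`, so the determinant that
remains is the Vandermonde determinant of the nodes `i`.
-/

section CommRing

open Matrix Nat

variable {R : Type*} [CommRing R]

theorem det_vandermonde_natCast (m : ℕ) :
    (vandermonde fun i : Fin m => ((i : ℕ) : R)).det = ∏ i ∈ range m, (i ! : R) := by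
  cases m with
  | zero => simp
  | succ l =>
    rw [det_vandermonde_id_eq_superFactorial, ← prod_range_succ_factorial, Nat.cast_prod]

theorem det_eval_ascPochhammer_eq_det_vandermonde {m : ℕ} (v : Fin m → R) :
    (of fun i j : Fin m => (ascPochhammer R j).eval (v i)).det = (vandermonde v).det := by
  nontriviality R
  -- Mathlib computes the degree of `ascPochhammer` over domains only, hence the detour via `ℤ`.
  have hmonic (j : ℕ) : (ascPochhammer ℤ j).Monic := monic_ascPochhammer ℤ j
  simp only [← ascPochhammer_map (Int.castRingHom R)]
  refine (det_eval_matrixOfPolynomials_eq_det_vandermonde v _ (fun j => ?_)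
    fun j => (hmonic j).map _).symm
  rw [(hmonic j).natDegree_map, ascPochhammer_natDegree]

theorem det_factorial_add_add (n m : ℕ) :
    (of fun i j : Fin m => ((n + i + j)! : R)).det =
      (∏ i ∈ range m, ((n + i)! : R)) * ∏ i ∈ range m, (i ! : R) := by
  have hfactor : (of fun i j : Fin m => ((n + i + j)! : R)) =
      of fun i j : Fin m => ((n + i)! : R) *
        (of fun i j : Fin m => (ascPochhammer R j).eval ((i : R) + (n + 1))) i j := by
    ext i j
    have hnode : ((n + i : ℕ) : R) + 1 = i + (n + 1) := by
      push_cast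
      ring
    simp only [of_apply]
    rw [← factorial_mul_ascPochhammer R (n + i) j, hnode]
  rw [hfactor, det_mul_column, det_eval_ascPochhammer_eq_det_vandermonde, det_vandermonde_add,
    det_vandermonde_natCast, Fin.prod_univ_eq_prod_range fun i => ((n + i)! : R)]

theorem pascal_rhombus_det_general (n k m : ℕ) (hk : k ≤ n) :
    ((∏ i ∈ range m, ((k + i)! : R)) * ∏ i ∈ range m, ((n - k + i)! : R)) *
        (of fun i j : Fin m => ((n + i + j).choose (k + j) : R)).det =
      (∏ i ∈ range m, ((n + i)! : R)) * ∏ i ∈ range m, (i ! : R) := by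
  have hentry (i j : ℕ) :
      (k + j)! * ((n - k + i)! * (n + i + j).choose (k + j)) = (n + i + j)! := by
    have hsub : n + i + j - (k + j) = n - k + i := by lia
    rw [← choose_mul_factorial_mul_factorial (by lia : k + j ≤ n + i + j), hsub]
    ring
  have hfactor : (of fun i j : Fin m => ((n + i + j)! : R)) =
      of fun i j : Fin m => ((k + j)! : R) *
        (of fun i j : Fin m => ((n - k + i)! : R) *
          (of fun i j : Fin m => ((n + i + j).choose (k + j) : R)) i j) i j := by
    ext i j
    simp only [of_apply]
    rw [← hentry, Nat.cast_mul, Nat.cast_mul]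
  rw [← det_factorial_add_add, hfactor, det_mul_row, det_mul_column,
    Fin.prod_univ_eq_prod_range fun i => ((k + i)! : R),
    Fin.prod_univ_eq_prod_range fun i => ((n - k + i)! : R), mul_assoc]

end CommRing

/-- **Lemma 5.4.** The determinant of the Pascal-rhombus matrix
`(i,j) ↦ (n+i+j).choose (k+j)` of size `(l+1) × (l+1)`. -/
theorem pascal_rhombus_det (n k l : ℕ) (hk : k ≤ n) :
    (Matrix.of fun i j : Fin (l + 1) =>
        (Nat.choose (n + (i : ℕ) + (j : ℕ)) (k + (j : ℕ)) : ℚ)).det =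
      ((∏ m ∈ Finset.range (l + 1), (Nat.factorial (n + m) : ℚ)) *
        ∏ m ∈ Finset.range (l + 1), (Nat.factorial m : ℚ)) /
      ((∏ m ∈ Finset.range (l + 1), (Nat.factorial (k + m) : ℚ)) *
        ∏ m ∈ Finset.range (l + 1), (Nat.factorial (n - k + m) : ℚ)) :=
  eq_div_of_mul_eq (by positivity)
    ((mul_comm _ _).trans (pascal_rhombus_det_general n k (l + 1) hk))
end

section
/- Let $p, r \geq 0$ and $q \geq 1$ be integers. The determinant of the $q \times q$ matrix whose $(i,j)$ entry (for $0 \leq i, j \leq q-1$) is the extended binomial coefficient $\binom{p+r}{p+i-j}$ equals $\dfrac{\left(\prod_{m=0}^{q-1}(p+r+m)!\right)\left(\prod_{m=0}^{q-1} m!\right)}{\left(\prod_{m=0}^{q-1}(p+m)!\right)\left(\prod_{m=0}^{q-1}(r+m)!\right)}$; in particular this determinant is positive. -/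
open Finset

/-- The extended binomial coefficient: `0` whenever the lower index is negative
(and, via `Nat.choose`, also `0` when it exceeds the upper index). -/
def ebinom (n : ℕ) (m : ℤ) : ℕ := if 0 ≤ m then n.choose m.toNat else 0

/-!
Multiplying the band matrix on the right by the unitriangular matrix of binomial coefficients
`C(k, j)` does not change its determinant, and by Vandermonde's convolution the product has entries
`C(p + r + k, p + i)`. Up to the row factors `1 / (p + i)!` and the column factors
`(p + r + k)! / (r + k)!`, these entries are the falling factorials of length `i` of `r + k`. As the
falling factorial of length `i` is a monic polynomial of degree `i`, what remains is the Vandermonde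
determinant of the nodes `r, r + 1, …, r + q - 1`.
-/

section ExtendedBinomial

lemma ebinom_natCast (n m : ℕ) : ebinom n m = n.choose m := by
  simp [ebinom]

lemma ebinom_of_neg (n : ℕ) {m : ℤ} (hm : m < 0) : ebinom n m = 0 :=
  if_neg hm.not_ge

lemma ebinom_succ (n : ℕ) (m : ℤ) : ebinom (n + 1) m = ebinom n m + ebinom n (m - 1) := by
  obtain hm | rfl | hm := lt_trichotomy m 0
  · simp only [ebinom_of_neg _ hm, ebinom_of_neg _ (show m - 1 < 0 by lia)]
  · simp [ebinom]
  · obtain ⟨k, rfl⟩ : ∃ k : ℕ, m = (k + 1 : ℕ) := ⟨(m - 1).toNat, by lia⟩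
    rw [show ((k + 1 : ℕ) : ℤ) - 1 = k by lia]
    simp only [ebinom_natCast, Nat.choose_succ_succ', add_comm]

lemma ebinom_add (n k : ℕ) (m : ℤ) :
    ebinom (n + k) m = ∑ j ∈ range (k + 1), k.choose j * ebinom n (m - j) := by
  induction k generalizing m with
  | zero => simp
  | succ k ih =>
    have pascal := sum_choose_succ_mul (fun j _ ↦ ebinom n (m - j)) k
    simp only [Nat.cast_id] at pascal
    rw [pascal, ← add_assoc, ebinom_succ, ih, ih]
    simp only [Nat.cast_add, Nat.cast_one, sub_sub, add_comm]

end ExtendedBinomial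

section Determinants

variable {R : Type*} [CommRing R] {q : ℕ}

lemma det_of_choose_eq_one : (Matrix.of fun j k : Fin q ↦ ((k : ℕ).choose j : R)).det = 1 := by
  rw [Matrix.det_of_isUpperTriangular]
  · simp
  · intro j k hkj
    simpa using congrArg (Nat.cast (R := R)) (Nat.choose_eq_zero_of_lt hkj)

lemma det_of_ebinom_sub (n : ℕ) (m : Fin q → ℤ) :
    (Matrix.of fun i j : Fin q ↦ (ebinom n (m i - (j : ℕ)) : R)).det =
      (Matrix.of fun i k : Fin q ↦ (ebinom (n + k) (m i) : R)).det := by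
  rw [← mul_one (Matrix.det _), ← det_of_choose_eq_one, ← Matrix.det_mul]
  congr 1
  ext i k
  have convolution : ebinom (n + k) (m i) =
      ∑ j ∈ range q, (k : ℕ).choose j * ebinom n (m i - j) := by
    rw [ebinom_add]
    refine sum_subset (range_mono k.isLt) fun j _ hj ↦ ?_
    rw [Nat.choose_eq_zero_of_lt (by simpa using hj), zero_mul]
  simp [Matrix.mul_apply, convolution, ← Fin.sum_univ_eq_sum_range, mul_comm]

lemma det_of_descFactorial [IsDomain R] (x : Fin q → ℕ) :
    (Matrix.of fun i k : Fin q ↦ ((x k).descFactorial i : R)).det =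
      (Matrix.vandermonde fun k ↦ (x k : R)).det := by
  rw [Matrix.det_eval_matrixOfPolynomials_eq_det_vandermonde _ (fun i ↦ descPochhammer R i)
    (fun i ↦ descPochhammer_natDegree R i) (fun i ↦ monic_descPochhammer R i)]
  simp only [descPochhammer_eval_eq_descFactorial]
  exact Matrix.det_transpose _

lemma factorial_mul_choose_add_add (p x i : ℕ) :
    (p + i).factorial * (x.factorial * (p + x).choose (p + i)) =
      (p + x).factorial * x.descFactorial i := by
  calc (p + i).factorial * (x.factorial * (p + x).choose (p + i))
      = x.factorial * (p + x).descFactorial (p + i) := by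
        rw [Nat.descFactorial_eq_factorial_mul_choose, mul_left_comm]
    _ = x.factorial * (x.descFactorial i * (p + x).descFactorial p) := by
        rw [← Nat.descFactorial_mul_descFactorial (p.le_add_right i), Nat.add_sub_cancel_left,
          Nat.add_sub_cancel_left]
    _ = (p + x).factorial * x.descFactorial i := by
        rw [mul_left_comm, mul_comm, ← Nat.factorial_mul_descFactorial (p.le_add_right x),
          Nat.add_sub_cancel_left]

lemma prod_factorial_mul_det_of_choose [IsDomain R] (p : ℕ) (x : Fin q → ℕ) :
    (∏ i : Fin q, ((p + i).factorial : R)) * ((∏ k, ((x k).factorial : R)) *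
        (Matrix.of fun i k : Fin q ↦ ((p + x k).choose (p + i) : R)).det) =
      (∏ k, ((p + x k).factorial : R)) * (Matrix.vandermonde fun k ↦ (x k : R)).det := by
  rw [← det_of_descFactorial, ← Matrix.det_mul_row fun k ↦ ((x k).factorial : R),
    ← Matrix.det_mul_row fun k ↦ ((p + x k).factorial : R), ← Matrix.det_mul_column]
  congr 1
  ext i k
  simpa using congrArg (Nat.cast (R := R)) (factorial_mul_choose_add_add p (x k) i)

lemma det_vandermonde_natCast_add_eq_prod_factorial (r : ℕ) :
    (Matrix.vandermonde fun k : Fin q ↦ ((r + k : ℕ) : R)).det =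
      ∏ m ∈ range q, (m.factorial : R) := by
  simp only [Nat.cast_add, add_comm (r : R), Matrix.det_vandermonde_add]
  cases q with
  | zero => simp
  | succ n =>
    rw [Matrix.det_vandermonde_id_eq_superFactorial, ← Nat.prod_range_succ_factorial, Nat.cast_prod]

end Determinants

theorem band_binomial_det_general {K : Type*} [Field K] [CharZero K] (p r q : ℕ) :
    (Matrix.of fun i j : Fin q ↦ (ebinom (p + r) ((p : ℤ) + (i : ℕ) - (j : ℕ)) : K)).det =
      ((∏ m ∈ range q, ((p + r + m).factorial : K)) * ∏ m ∈ range q, (m.factorial : K)) /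
      ((∏ m ∈ range q, ((p + m).factorial : K)) * ∏ m ∈ range q, ((r + m).factorial : K)) := by
  have factorial_prod_ne_zero (a : ℕ) : ∏ m ∈ range q, ((a + m).factorial : K) ≠ 0 :=
    prod_ne_zero_iff.2 fun m _ ↦ Nat.cast_ne_zero.2 (a + m).factorial_ne_zero
  have key := prod_factorial_mul_det_of_choose (R := K) p fun k : Fin q ↦ r + k
  rw [det_vandermonde_natCast_add_eq_prod_factorial,
    Fin.prod_univ_eq_prod_range (fun m ↦ ((p + m).factorial : K)),
    Fin.prod_univ_eq_prod_range (fun m ↦ ((r + m).factorial : K)),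
    Fin.prod_univ_eq_prod_range (fun m ↦ ((p + (r + m)).factorial : K))] at key
  rw [det_of_ebinom_sub,
    eq_div_iff (mul_ne_zero (factorial_prod_ne_zero p) (factorial_prod_ne_zero r)), mul_comm,
    mul_assoc]
  simpa only [← Nat.cast_add, ebinom_natCast, add_assoc] using key

/-- **Lemma 5.3.** The band determinant of extended binomial coefficients
`(i,j) ↦ C(p+r, p+i-j)` of size `q × q` equals the explicit ratio of factorials;
in particular it is positive. -/
theorem band_binomial_det (p r q : ℕ) (hq : 1 ≤ q) :
    (Matrix.of fun i j : Fin q =>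
        (ebinom (p + r) ((p : ℤ) + (i : ℕ) - (j : ℕ)) : ℚ)).det =
      ((∏ m ∈ Finset.range q, (Nat.factorial (p + r + m) : ℚ)) *
        ∏ m ∈ Finset.range q, (Nat.factorial m : ℚ)) /
      ((∏ m ∈ Finset.range q, (Nat.factorial (p + m) : ℚ)) *
        ∏ m ∈ Finset.range q, (Nat.factorial (r + m) : ℚ)) ∧
    0 < (Matrix.of fun i j : Fin q =>
        (ebinom (p + r) ((p : ℤ) + (i : ℕ) - (j : ℕ)) : ℚ)).det := by
  refine ⟨band_binomial_det_general p r q, ?_⟩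
  rw [band_binomial_det_general]
  positivity
end

section
/- Let $n, l \geq 0$ be integers. The determinant of the $(l+1) \times (l+1)$ matrix whose $(i,j)$ entry (for $0 \leq i, j \leq l$) is the rising product $(n+j+1)(n+j+2)\cdots(n+j+i)$ (equal to $1$ when $i = 0$) equals $\prod_{m=0}^{l} m! = 1! \, 2! \cdots l!$. -/
open Finset

section

variable {R : Type*} [CommRing R]

/-- The `i`-th row evaluates a monic polynomial of degree `i` at the nodes `v j`, so the matrix
arises from the transposed Vandermonde matrix by unitriangular row operations. -/
lemma det_of_prod_range_add_eq_det_vandermonde {n : ℕ} (v : Fin n → R) (a : ℕ → R) :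
    (Matrix.of fun i j : Fin n => ∏ m ∈ range (i : ℕ), (v j + a m)).det =
      (Matrix.vandermonde v).det := by
  nontriviality R
  let p (i : Fin n) : Polynomial R :=
    ∏ m ∈ range (i : ℕ), (Polynomial.X + Polynomial.C (a m))
  have p_monic (i : Fin n) : (p i).Monic :=
    Polynomial.monic_prod_of_monic _ _ fun m _ => Polynomial.monic_X_add_C (a m)
  have p_natDegree (i : Fin n) : (p i).natDegree = i := by
    rw [Polynomial.natDegree_prod_of_monic _ _ fun m _ => Polynomial.monic_X_add_C (a m)]
    simp
  rw [Matrix.det_eval_matrixOfPolynomials_eq_det_vandermonde v p p_natDegree p_monic,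
    ← Matrix.det_transpose]
  congr 1
  ext i j
  simp [p, Polynomial.eval_prod]

lemma det_vandermonde_add_natCast (x : R) (l : ℕ) :
    (Matrix.vandermonde fun i : Fin (l + 1) => x + (i : ℕ)).det =
      ∏ m ∈ range (l + 1), (Nat.factorial m : R) := by
  simp_rw [add_comm x]
  rw [Matrix.det_vandermonde_add, Matrix.det_vandermonde_id_eq_superFactorial,
    ← Nat.prod_range_succ_factorial, Nat.cast_prod]

theorem rising_product_det_general (x : R) (l : ℕ) :
    (Matrix.of fun i j : Fin (l + 1) => ∏ m ∈ range (i : ℕ), (x + (j : ℕ) + 1 + m)).det =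
      ∏ m ∈ range (l + 1), (Nat.factorial m : R) := by
  simp_rw [add_right_comm x _ 1]
  rw [det_of_prod_range_add_eq_det_vandermonde (fun j : Fin (l + 1) => x + 1 + (j : ℕ)) (↑),
    det_vandermonde_add_natCast]

end

/-- The determinant of the matrix of rising products
`(i,j) ↦ (n+j+1)(n+j+2)⋯(n+j+i)` of size `(l+1) × (l+1)` equals `1! 2! ⋯ l!`. -/
theorem rising_product_det (n l : ℕ) :
    (Matrix.of fun i j : Fin (l + 1) =>
        ∏ m ∈ Finset.range (i : ℕ), ((n : ℤ) + (j : ℕ) + 1 + m)).det =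
      ∏ m ∈ Finset.range (l + 1), (Nat.factorial m : ℤ) :=
  rising_product_det_general (n : ℤ) l
end

section
/- Fix an integer $n \geq 3$. For $t \in \mathbb{R}$ and $1 \leq m \leq n$ let $u_m(t) \in \mathbb{R}^n$ be the vector whose $i$-th entry is $\binom{n-m}{i-1}\, t^{\,n-m-i+1}$ if $1 \leq i \leq n-m+1$ and $0$ otherwise. Let $a, b, c \in \mathbb{R}$ be pairwise distinct, and for nonnegative integers $d_1, d_2, d_3$ with $d_1+d_2+d_3 = n$ let $\Delta(d_1,d_2,d_3)$ be the determinant of the $n \times n$ matrix with columns $u_1(a),\dots,u_{d_1}(a), u_1(b),\dots,u_{d_2}(b), u_1(c),\dots,u_{d_3}(c)$. Then (i) $\Delta(d_1,d_2,d_3) \neq 0$ for all such $(d_1,d_2,d_3)$, and (ii) for all integers $p, q, r \geq 1$ with $p+q+r = n$, $\Delta(p{+}1,q,r{-}1)\,\Delta(p,q{-}1,r{+}1)\,\Delta(p{-}1,q{+}1,r) = \Delta(p{-}1,q,r{+}1)\,\Delta(p,q{+}1,r{-}1)\,\Delta(p{+}1,q{-}1,r)$; that is, every $(p,q,r)$-th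 triple ratio of the Veronese flags at $a$, $b$, $c$ equals $1$. -/
/-- `veroVec n t m` is the vector `u_{m+1}(t) ∈ ℝ^n`: the coefficient vector of the
polynomial `(tX+Y)^{n-(m+1)} X^m` in the basis `X^{n-1}, X^{n-2}Y, …, Y^{n-1}`.
Its `i`-th entry (`0`-indexed) is `C(n-1-m, i) t^{n-1-m-i}` for `i ≤ n-1-m`, and `0`
otherwise. Here `m` is the `0`-indexed version of the paper's index `m ∈ {1,…,n}`. -/
def veroVec (n : ℕ) (t : ℝ) (m : ℕ) : Fin n → ℝ := fun i =>
  if (i : ℕ) ≤ n - 1 - m then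
    (Nat.choose (n - 1 - m) (i : ℕ) : ℝ) * t ^ (n - 1 - m - (i : ℕ))
  else 0

/-- `veroDelta n a b c d₁ d₂ d₃` is the determinant `Δ(d₁,d₂,d₃)` of the `n × n`
matrix with columns `u_1(a),…,u_{d₁}(a), u_1(b),…,u_{d₂}(b), u_1(c),…,u_{d₃}(c)`
(meaningful when `d₁ + d₂ + d₃ = n`). -/
def veroDelta (n : ℕ) (a b c : ℝ) (d₁ d₂ d₃ : ℕ) : ℝ :=
  (Matrix.of fun i j : Fin n =>
    if (j : ℕ) < d₁ then veroVec n a (j : ℕ) i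
    else if (j : ℕ) < d₁ + d₂ then veroVec n b ((j : ℕ) - d₁) i
    else veroVec n c ((j : ℕ) - d₁ - d₂) i).det

/-!
Since `C(n-1, m) C(n-1-m, i) = C(n-1, i) C(n-1-i, m)`, rescaling the rows and columns by binomial
coefficients and reversing the order of the entries turns the matrix of `Δ(d₁, d₂, d₃)` into a
confluent Vandermonde matrix with nodes `a`, `b`, `c`. Its rows take Hasse derivatives at the nodes,
and these vanish above the diagonal on the Newton basis `1, X - x₀, (X - x₀)(X - x₁), …`. This gives
`Δ(d₁, d₂, d₃) = K (b-a)^(d₁d₂) (c-a)^(d₁d₃) (c-b)^(d₂d₃) / (B(d₁) B(d₂) B(d₃))` with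
`B(d) = ∏_{k < d} C(n-1, k)` and `K ≠ 0` depending only on `n`. Both sides of the triple ratio
identity involve the same factors `B(d)`, and each of `b-a`, `c-a`, `c-b` has the same total
exponent on both.
-/

section ConfluentVandermonde

open Polynomial Finset Lagrange

variable {R ι : Type*} [CommRing R]

lemma eval_hasseDeriv_X_sub_C_pow_mul (t : R) (k : ℕ) (p : R[X]) :
    (hasseDeriv k ((X - C t) ^ k * p)).eval t = p.eval t := by
  rw [← taylor_coeff, taylor_mul, taylor_pow]
  simp [coeff_X_pow_mul', taylor_coeff_zero]

lemma eval_hasseDeriv_X_sub_C_pow_mul_of_lt (t : R) {m k : ℕ} (hmk : m < k) (p : R[X]) :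
    (hasseDeriv m ((X - C t) ^ k * p)).eval t = 0 := by
  rw [← taylor_coeff, taylor_mul, taylor_pow]
  simp [coeff_X_pow_mul', hmk]

lemma eval_hasseDeriv_eq_sum (t : R) (k : ℕ) {n : ℕ} {p : R[X]} (hp : p.natDegree < n) :
    (hasseDeriv k p).eval t =
      ∑ m : Fin n, ((m : ℕ).choose k : R) * t ^ (m - k : ℕ) * p.coeff m := by
  conv_lhs => rw [p.as_sum_range' n hp]
  rw [map_sum, eval_finsetSum, ← Fin.sum_univ_eq_sum_range
    (fun m => (hasseDeriv k (monomial m (p.coeff m))).eval t)]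
  refine sum_congr rfl fun m _ => ?_
  rw [hasseDeriv_monomial, eval_monomial]
  ring

variable [DecidableEq ι]

/-- The number of earlier occurrences of the label `l i` in the sequence `l`: the order of the
derivative taken in row `i` of a confluent Vandermonde matrix. -/
def priorCount (l : ℕ → ι) (i : ℕ) : ℕ := Nat.count (fun k => l k = l i) i

/-- The confluent Vandermonde matrix of the nodes `x (l 0), …, x (l (n - 1))`: row `i` holds the
values at `x (l i)` of the Hasse derivatives of order `priorCount l i` of `1, X, …, X ^ (n - 1)`.
Repetition is read off from the labels `l` rather than from the nodes, so that two labels may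
share a node. -/
def confluentVandermonde (x : ι → R) (l : ℕ → ι) (n : ℕ) : Matrix (Fin n) (Fin n) R :=
  Matrix.of fun i j => ((j : ℕ).choose (priorCount l i) : R) * x (l i) ^ (j - priorCount l i : ℕ)

lemma eval_hasseDeriv_matrixOfPolynomials_eq_confluentVandermonde_mul (x : ι → R) (l : ℕ → ι)
    {n : ℕ} (p : Fin n → R[X]) (hp : ∀ j, (p j).natDegree ≤ j) :
    Matrix.of (fun i j : Fin n => (hasseDeriv (priorCount l i) (p j)).eval (x (l i))) =
      confluentVandermonde x l n * Matrix.of (fun i j : Fin n => (p j).coeff i) := by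
  ext i j
  exact eval_hasseDeriv_eq_sum _ _ ((hp j).trans_lt j.isLt)

lemma nodal_range_eq_X_sub_C_pow_count_mul (x : ι → R) (l : ℕ → ι) (s : ι) (j : ℕ) :
    nodal (range j) (x ∘ l) = (X - C (x s)) ^ Nat.count (fun k => l k = s) j *
      nodal {k ∈ range j | l k ≠ s} (x ∘ l) := by
  simp only [nodal_eq]
  rw [← prod_filter_mul_prod_filter_not (range j) (fun k => l k = s),
    Nat.count_eq_card_filter_range, ← prod_const]
  congr 1
  refine prod_congr rfl fun k hk => ?_
  rw [Function.comp_apply, (mem_filter.1 hk).2]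

lemma eval_hasseDeriv_nodal_range_self (x : ι → R) (l : ℕ → ι) (i : ℕ) :
    (hasseDeriv (priorCount l i) (nodal (range i) (x ∘ l))).eval (x (l i)) =
      ∏ k ∈ range i with l k ≠ l i, (x (l i) - x (l k)) := by
  rw [priorCount, nodal_range_eq_X_sub_C_pow_count_mul x l (l i),
    eval_hasseDeriv_X_sub_C_pow_mul, eval_nodal]
  simp only [Function.comp_apply]

lemma eval_hasseDeriv_nodal_range_of_lt (x : ι → R) (l : ℕ → ι) {i j : ℕ} (hij : i < j) :
    (hasseDeriv (priorCount l i) (nodal (range j) (x ∘ l))).eval (x (l i)) = 0 := by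
  have hcount : priorCount l i < Nat.count (fun k => l k = l i) j :=
    Nat.count_strict_mono (p := fun k => l k = l i) rfl hij
  rw [nodal_range_eq_X_sub_C_pow_count_mul x l (l i)]
  exact eval_hasseDeriv_X_sub_C_pow_mul_of_lt _ hcount _

theorem det_confluentVandermonde (x : ι → R) (l : ℕ → ι) (n : ℕ) :
    (confluentVandermonde x l n).det =
      ∏ i ∈ range n, ∏ k ∈ range i with l k ≠ l i, (x (l i) - x (l k)) := by
  nontriviality R
  let newton : Fin n → R[X] := fun j => nodal (range j) (x ∘ l)
  have natDegree_newton (j : Fin n) : (newton j).natDegree = j := by simp [newton]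
  have monic_newton (j : Fin n) : (newton j).Monic := nodal_monic
  let M : Matrix (Fin n) (Fin n) R :=
    Matrix.of fun i j => (hasseDeriv (priorCount l i) (newton j)).eval (x (l i))
  have det_eq_det_M : (confluentVandermonde x l n).det = M.det := by
    have hM : M = confluentVandermonde x l n *
        Matrix.of (fun i j : Fin n => (newton j).coeff i) :=
      eval_hasseDeriv_matrixOfPolynomials_eq_confluentVandermonde_mul x l newton
        fun j => (natDegree_newton j).le
    rw [hM, Matrix.det_mul,
      Matrix.det_matrixOfPolynomials newton natDegree_newton monic_newton, mul_one]
  have lower_M : M.IsLowerTriangular := fun i j hij =>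
    eval_hasseDeriv_nodal_range_of_lt x l (Fin.lt_def.1 hij)
  rw [det_eq_det_M, Matrix.det_of_isLowerTriangular _ lower_M, ← Fin.prod_univ_eq_prod_range
    (fun i => ∏ k ∈ range i with l k ≠ l i, (x (l i) - x (l k)))]
  exact prod_congr rfl fun i _ => eval_hasseDeriv_nodal_range_self x l i

end ConfluentVandermonde

section Labels

open Finset

variable {M ι : Type*} [CommMonoid M] [Fintype ι]

lemma prod_range_comp_eq_prod_pow_count [DecidableEq ι] (f : ι → M) (l : ℕ → ι) (n : ℕ) :
    ∏ i ∈ range n, f (l i) = ∏ s, f s ^ Nat.count (fun k => l k = s) n := by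
  simp only [Nat.count_eq_card_filter_range, ← prod_const]
  exact (prod_fiberwise' (range n) l f).symm

lemma prod_range_priorCount [DecidableEq ι] (f : ℕ → M) (l : ℕ → ι) (n : ℕ) :
    ∏ i ∈ range n, f (priorCount l i) =
      ∏ s, ∏ k ∈ range (Nat.count (fun i => l i = s) n), f k := by
  induction n with
  | zero => simp
  | succ n ih =>
    have hstep (s : ι) : ∏ k ∈ range (Nat.count (fun i => l i = s) (n + 1)), f k =
        (∏ k ∈ range (Nat.count (fun i => l i = s) n), f k) *
          if l n = s then f (priorCount l n) else 1 := by
      rw [Nat.count_succ]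
      split_ifs with h
      · rw [prod_range_succ, priorCount, h]
      · rw [add_zero, mul_one]
    simp only [hstep, prod_mul_distrib, prod_ite_eq, mem_univ, if_true, prod_range_succ, ih]

lemma prod_range_filter_ne_eq_prod_pow_count [LinearOrder ι] {l : ℕ → ι} (hl : Monotone l)
    (f : ι → ι → M) (n : ℕ) :
    ∏ i ∈ range n, ∏ k ∈ range i with l k ≠ l i, f (l k) (l i) =
      ∏ t, ∏ s with s < t,
        f s t ^ (Nat.count (fun k => l k = s) n * Nat.count (fun k => l k = t) n) := by
  have hfilter : ∀ i ∈ range n, {k ∈ range i | l k ≠ l i} = {k ∈ range n | l k < l i} := by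
    intro i hi
    ext k
    simp only [mem_filter, mem_range] at hi ⊢
    exact ⟨fun h => ⟨h.1.trans hi, (hl h.1.le).lt_of_ne h.2⟩,
      fun h => ⟨hl.reflect_lt h.2, h.2.ne⟩⟩
  calc ∏ i ∈ range n, ∏ k ∈ range i with l k ≠ l i, f (l k) (l i)
    _ = ∏ i ∈ range n, ∏ k ∈ range n, if l k < l i then f (l k) (l i) else 1 :=
      prod_congr rfl fun i hi => by rw [hfilter i hi, prod_filter]
    _ = ∏ i ∈ range n, ∏ s with s < l i, f s (l i) ^ Nat.count (fun k => l k = s) n :=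
      prod_congr rfl fun i _ => by
        rw [prod_range_comp_eq_prod_pow_count (fun s => if s < l i then f s (l i) else 1)]
        simp only [ite_pow, one_pow, prod_filter]
    _ = _ := by
      rw [prod_range_comp_eq_prod_pow_count
        (fun t => ∏ s with s < t, f s t ^ Nat.count (fun k => l k = s) n)]
      simp only [← prod_pow, ← pow_mul]

end Labels

section BlockLabel

/-- The labelling of the columns of `veroDelta`: the first `d₁` columns have label `0`, the next
`d₂` have label `1`, and all further ones label `2`. -/
def blockLabel (d₁ d₂ j : ℕ) : Fin 3 :=
  if j < d₁ then 0 else if j < d₁ + d₂ then 1 else 2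

lemma monotone_blockLabel (d₁ d₂ : ℕ) : Monotone (blockLabel d₁ d₂) := by
  intro i j hij
  unfold blockLabel
  split_ifs <;> omega

lemma count_blockLabel (d₁ d₂ : ℕ) (s : Fin 3) (j : ℕ) :
    Nat.count (fun k => blockLabel d₁ d₂ k = s) j =
      ![min j d₁, min (j - d₁) d₂, j - d₁ - d₂] s := by
  induction j with
  | zero => fin_cases s <;> simp
  | succ j ih =>
    rw [Nat.count_succ, ih, blockLabel]
    clear ih
    split_ifs <;> fin_cases s <;> simp_all <;> omega

lemma priorCount_blockLabel (d₁ d₂ j : ℕ) :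
    priorCount (blockLabel d₁ d₂) j =
      if j < d₁ then j else if j < d₁ + d₂ then j - d₁ else j - d₁ - d₂ := by
  rw [priorCount, count_blockLabel, blockLabel]
  split_ifs <;> simp <;> omega

end BlockLabel

section Veronese

open Finset

lemma choose_mul_veroVec (n : ℕ) (t : ℝ) {m : ℕ} (hm : m < n) (i : Fin n) :
    ((n - 1).choose m : ℝ) * veroVec n t m i =
      ((n - 1).choose i : ℝ) * (((i.rev : ℕ).choose m : ℝ) * t ^ (i.rev - m : ℕ)) := by
  have hrev : (i.rev : ℕ) = n - 1 - i := by rw [Fin.val_rev]; omega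
  rw [veroVec, hrev]
  split_ifs with hi
  · have hchoose : ((n - 1).choose m : ℝ) * (n - 1 - m).choose i =
        (n - 1).choose i * (n - 1 - i).choose m := by
      have hm' := Nat.choose_mul (n := n - 1) (k := m + i) (s := m) (Nat.le_add_right m i)
      have hi' := Nat.choose_mul (n := n - 1) (k := m + i) (s := i) (Nat.le_add_left i m)
      rw [Nat.add_sub_cancel_left] at hm'
      rw [Nat.add_sub_cancel, ← Nat.choose_symm_add, hm'] at hi'
      exact_mod_cast hi'
    rw [← mul_assoc, ← mul_assoc, hchoose, Nat.sub_right_comm (n - 1)]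
  · rw [Nat.choose_eq_zero_of_lt (by omega : n - 1 - i < m)]
    simp

lemma veroDelta_eq_det (n : ℕ) (a b c : ℝ) (d₁ d₂ d₃ : ℕ) :
    veroDelta n a b c d₁ d₂ d₃ = (Matrix.of fun i j : Fin n =>
      veroVec n (![a, b, c] (blockLabel d₁ d₂ i)) (priorCount (blockLabel d₁ d₂) i) j).det := by
  rw [← Matrix.det_transpose, veroDelta]
  congr 1
  ext i j
  simp only [Matrix.of_apply, Matrix.transpose_apply, priorCount_blockLabel, blockLabel]
  split_ifs <;> simp

/-- The product of the first `d` entries of row `N` of Pascal's triangle: the factor by which a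
block of `d` columns of `veroDelta (N + 1)` differs from one of a confluent Vandermonde matrix. -/
def chooseProd (N d : ℕ) : ℝ := ∏ k ∈ range d, (N.choose k : ℝ)

lemma chooseProd_ne_zero {N d : ℕ} (hd : d ≤ N + 1) : chooseProd N d ≠ 0 := by
  refine prod_ne_zero_iff.2 fun k hk => ?_
  have hk : k ≤ N := by have := mem_range.1 hk; omega
  exact_mod_cast (Nat.choose_pos hk).ne'

lemma prod_choose_priorCount_blockLabel (N d₁ d₂ d₃ : ℕ) :
    ∏ i : Fin (d₁ + d₂ + d₃), (N.choose (priorCount (blockLabel d₁ d₂) i) : ℝ) =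
      chooseProd N d₁ * chooseProd N d₂ * chooseProd N d₃ := by
  rw [Fin.prod_univ_eq_prod_range (fun i => (N.choose (priorCount (blockLabel d₁ d₂) i) : ℝ)),
    prod_range_priorCount (fun k => (N.choose k : ℝ)), Fin.prod_univ_three]
  simp [count_blockLabel, chooseProd, add_assoc]

lemma det_confluentVandermonde_blockLabel (a b c : ℝ) (d₁ d₂ d₃ : ℕ) :
    (confluentVandermonde ![a, b, c] (blockLabel d₁ d₂) (d₁ + d₂ + d₃)).det =
      (b - a) ^ (d₁ * d₂) * (c - a) ^ (d₁ * d₃) * (c - b) ^ (d₂ * d₃) := by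
  rw [det_confluentVandermonde, prod_range_filter_ne_eq_prod_pow_count
    (monotone_blockLabel d₁ d₂) (fun s t => ![a, b, c] t - ![a, b, c] s)]
  simp [count_blockLabel, prod_filter, Fin.prod_univ_three, add_assoc, mul_assoc]

lemma chooseProd_mul_veroDelta (a b c : ℝ) (d₁ d₂ d₃ : ℕ) {n : ℕ} (hn : d₁ + d₂ + d₃ = n) :
    chooseProd (n - 1) d₁ * chooseProd (n - 1) d₂ * chooseProd (n - 1) d₃ *
        veroDelta n a b c d₁ d₂ d₃ =
      chooseProd (n - 1) n * ((Equiv.Perm.sign (Fin.revPerm (n := n)) : ℤ) *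
        ((b - a) ^ (d₁ * d₂) * (c - a) ^ (d₁ * d₃) * (c - b) ^ (d₂ * d₃))) := by
  subst hn
  rw [← prod_choose_priorCount_blockLabel, veroDelta_eq_det, ← Matrix.det_mul_column,
    ← det_confluentVandermonde_blockLabel, ← Matrix.det_permute', chooseProd,
    ← Fin.prod_univ_eq_prod_range (fun k => ((d₁ + d₂ + d₃ - 1).choose k : ℝ)),
    ← Matrix.det_mul_row]
  congr 1
  ext i j
  exact choose_mul_veroVec _ _ ((Nat.count_le _).trans_lt i.isLt) j

theorem veroDelta_eq (a b c : ℝ) (d₁ d₂ d₃ : ℕ) {n : ℕ} (hn : d₁ + d₂ + d₃ = n) :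
    veroDelta n a b c d₁ d₂ d₃ =
      Equiv.Perm.sign (Fin.revPerm (n := n)) * chooseProd (n - 1) n *
        ((b - a) ^ (d₁ * d₂) * (c - a) ^ (d₁ * d₃) * (c - b) ^ (d₂ * d₃)) /
          (chooseProd (n - 1) d₁ * chooseProd (n - 1) d₂ * chooseProd (n - 1) d₃) := by
  have hprod (d : ℕ) (hd : d ≤ n) : chooseProd (n - 1) d ≠ 0 := chooseProd_ne_zero (by omega)
  have h₁ := hprod d₁ (by omega)
  have h₂ := hprod d₂ (by omega)
  have h₃ := hprod d₃ (by omega)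
  rw [eq_div_iff (by positivity)]
  linear_combination chooseProd_mul_veroDelta a b c d₁ d₂ d₃ hn

theorem veroDelta_ne_zero {a b c : ℝ} (hab : a ≠ b) (hac : a ≠ c) (hbc : b ≠ c)
    {n d₁ d₂ d₃ : ℕ} (hn : d₁ + d₂ + d₃ = n) : veroDelta n a b c d₁ d₂ d₃ ≠ 0 := by
  have hchoose : chooseProd (n - 1) n ≠ 0 := chooseProd_ne_zero (by omega)
  exact right_ne_zero_of_mul <|
    ne_of_eq_of_ne (chooseProd_mul_veroDelta a b c d₁ d₂ d₃ hn) <| by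
      simp [hchoose, sub_eq_zero, hab.symm, hac.symm, hbc.symm]

theorem veroDelta_mul_veroDelta_mul_veroDelta (a b c : ℝ) {n p q r : ℕ} (hp : 1 ≤ p) (hq : 1 ≤ q)
    (hr : 1 ≤ r) (hn : p + q + r = n) :
    veroDelta n a b c (p + 1) q (r - 1) * veroDelta n a b c p (q - 1) (r + 1) *
        veroDelta n a b c (p - 1) (q + 1) r =
      veroDelta n a b c (p - 1) q (r + 1) * veroDelta n a b c p (q + 1) (r - 1) *
        veroDelta n a b c (p + 1) (q - 1) r := by
  obtain ⟨p, rfl⟩ := Nat.exists_eq_add_of_le' hp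
  obtain ⟨q, rfl⟩ := Nat.exists_eq_add_of_le' hq
  obtain ⟨r, rfl⟩ := Nat.exists_eq_add_of_le' hr
  simp only [Nat.add_sub_cancel]
  iterate 6 rw [veroDelta_eq a b c _ _ _ (by omega)]
  ring

end Veronese

/-- **Proposition 5.1.** For pairwise distinct `a, b, c ∈ ℝ`, the Veronese flags at
`a`, `b`, `c` form a generic triple (all the determinants `Δ(d₁,d₂,d₃)` are nonzero),
and every `(p,q,r)`-th triple ratio equals `1`. -/
theorem veronese_triple_ratio_eq_one (n : ℕ) (hn : 3 ≤ n) (a b c : ℝ)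
    (hab : a ≠ b) (hac : a ≠ c) (hbc : b ≠ c) :
    (∀ d₁ d₂ d₃ : ℕ, d₁ + d₂ + d₃ = n → veroDelta n a b c d₁ d₂ d₃ ≠ 0) ∧
    ∀ p q r : ℕ, 1 ≤ p → 1 ≤ q → 1 ≤ r → p + q + r = n →
      veroDelta n a b c (p + 1) q (r - 1) * veroDelta n a b c p (q - 1) (r + 1) *
          veroDelta n a b c (p - 1) (q + 1) r =
        veroDelta n a b c (p - 1) q (r + 1) * veroDelta n a b c p (q + 1) (r - 1) *
          veroDelta n a b c (p + 1) (q - 1) r :=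
  ⟨fun _ _ _ hd => veroDelta_ne_zero hab hac hbc hd,
    fun _ _ _ hp hq hr hn => veroDelta_mul_veroDelta_mul_veroDelta a b c hp hq hr hn⟩
end

section
/- Fix an integer $n \geq 2$. For $t \in \mathbb{R}$ and $1 \leq m \leq n$ let $u_m(t) \in \mathbb{R}^n$ be the vector whose $i$-th entry is $\binom{n-m}{i-1}\, t^{\,n-m-i+1}$ if $1 \leq i \leq n-m+1$ and $0$ otherwise. Let $a, b, c, d \in \mathbb{R}$ be pairwise distinct and let $1 \leq p \leq n-1$. Writing $\det[U_k(s), U_l(t), x]$ for the determinant of the $n \times n$ matrix with columns $u_1(s),\dots,u_k(s), u_1(t),\dots,u_l(t), x$, the four determinants $\det[U_p(a), U_{n-p-1}(c), u_1(b)]$, $\det[U_{p-1}(a), U_{n-p}(c), u_1(d)]$, $\det[U_p(a), U_{n-p-1}(c), u_1(d)]$, $\det[U_{p-1}(a), U_{n-p}(c), u_1(b)]$ are all nonzero, and $-\dfrac{\det[U_p(a), U_{n-p-1}(c), u_1(b)]\cdot\det[U_{p-1}(a), U_{n-p}(c), u_1(d)]}{\det[U_p(a), U_{n-p-1}(c),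 u_1(d)]\cdot\det[U_{p-1}(a), U_{n-p}(c), u_1(b)]} = -\dfrac{(b-a)(d-c)}{(b-c)(d-a)}$. -/
/-- `veroDet2 n k s t x` is `det[U_k(s), U_{n-1-k}(t), x]`: the determinant of the
`n × n` matrix with columns `u_1(s),…,u_k(s), u_1(t),…,u_{n-1-k}(t), x`. -/
def veroDet2 (n : ℕ) (k : ℕ) (s t : ℝ) (x : Fin n → ℝ) : ℝ :=
  (Matrix.of fun i j : Fin n =>
    if (j : ℕ) < k then veroVec n s (j : ℕ) i
    else if (j : ℕ) < n - 1 then veroVec n t ((j : ℕ) - k) i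
    else x i).det

/-!
For `v ∈ Kᴺ⁺¹` the function `t ↦ v ⬝ u₁(t)` is a polynomial of degree at most `N = n - 1`, and its
`m`-th Hasse derivative at `t` is a multiple of `v ⬝ u_{m+1}(t)`. Hence a covector annihilating
`u₁(s), …, u_k(s), u₁(t), …, u_{N-k}(t)` has polynomial `v₀ (X - s)ᵏ (X - t)ᴺ⁻ᵏ`, where `v₀` is the
value of `v` at `e₀ = u₁(∞)`. The last row of the adjugate of the matrix with these columns is such
a covector, and pairing it with `x` gives the determinant, so
`det[U_k(s), U_{N-k}(t), u₁(b)] = det[U_k(s), U_{N-k}(t), e₀] (b - s)ᵏ (b - t)ᴺ⁻ᵏ`.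
The first factor on the right cancels in the double ratio. It is nonzero: a covector in the left
kernel of its matrix has `v₀ = 0`, hence is zero.
-/

open Polynomial Matrix

section Polynomial

theorem eq_C_coeff_mul_of_monic_of_dvd {R : Type*} [CommSemiring R] {f q : R[X]} {N : ℕ}
    (hq : q.Monic) (hqN : q.natDegree = N) (hdvd : q ∣ f) (hf : f.natDegree ≤ N) :
    f = C (f.coeff N) * q := by
  have hfq := eq_leadingCoeff_mul_of_monic_of_dvd_of_natDegree_le hq hdvd (hf.trans hqN.ge)
  have hcoeff : f.coeff N = f.leadingCoeff := by
    conv_lhs => rw [hfq, coeff_C_mul, ← hqN, hq.coeff_natDegree, mul_one]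
  rwa [hcoeff]

variable {R : Type*} [CommRing R]

theorem X_sub_C_pow_dvd_iff_eval_hasseDeriv {f : R[X]} {t : R} {k : ℕ} :
    (X - C t) ^ k ∣ f ↔ ∀ m < k, (hasseDeriv m f).eval t = 0 := by
  simp only [X_sub_C_pow_dvd_iff, X_pow_dvd_iff, ← taylor_apply, taylor_coeff]

theorem eq_C_coeff_mul_X_sub_C_pow_mul {f : R[X]} {N k : ℕ} {s t : R} (hk : k ≤ N)
    (hst : IsUnit (s - t)) (hf : f.natDegree ≤ N) (hs : (X - C s) ^ k ∣ f)
    (ht : (X - C t) ^ (N - k) ∣ f) :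
    f = C (f.coeff N) * ((X - C s) ^ k * (X - C t) ^ (N - k)) := by
  nontriviality R
  have hcop : IsCoprime ((X - C s) ^ k) ((X - C t) ^ (N - k)) :=
    (isCoprime_X_sub_C_of_isUnit_sub hst).pow
  have hmonic_s : ((X - C s) ^ k).Monic := (monic_X_sub_C s).pow k
  have hmonic_t : ((X - C t) ^ (N - k)).Monic := (monic_X_sub_C t).pow (N - k)
  refine eq_C_coeff_mul_of_monic_of_dvd (hmonic_s.mul hmonic_t) ?_ (hcop.mul_dvd hs ht) hf
  rw [hmonic_s.natDegree_mul hmonic_t, (monic_X_sub_C s).natDegree_pow,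
    (monic_X_sub_C t).natDegree_pow, natDegree_X_sub_C, natDegree_X_sub_C, mul_one, mul_one,
    Nat.add_sub_cancel' hk]

end Polynomial

section Pairing

variable {R : Type*} [CommSemiring R] {N : ℕ}

/-- The vector `u_{m+1}(t)` of the Veronese flag over a commutative semiring, in dimension `N + 1`.
No case distinction is needed, as the binomial coefficient vanishes for `i > N - m`. -/
def veroneseVec (N : ℕ) (t : R) (m : ℕ) : Fin (N + 1) → R :=
  fun i => (N - m).choose i * t ^ (N - m - i)

/-- The polynomial in `t` given by the pairing `v ⬝ u₁(t)`. Over a field of characteristic zero this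
identifies covectors with polynomials of degree at most `N`. -/
noncomputable def veronesePairing (v : Fin (N + 1) → R) : R[X] :=
  ∑ i : Fin (N + 1), monomial (N - i) (v i * N.choose i)

theorem choose_mul_choose_sub_comm (N i m : ℕ) :
    N.choose i * (N - i).choose m = N.choose m * (N - m).choose i := by
  have hi := Nat.choose_mul (n := N) (Nat.le_add_right i m)
  have hm := Nat.choose_mul (n := N) (Nat.le_add_left m i)
  rw [Nat.add_sub_cancel_left] at hi
  rw [Nat.add_sub_cancel] at hm
  rw [← hi, ← hm, Nat.choose_symm_add]

theorem eval_hasseDeriv_veronesePairing (v : Fin (N + 1) → R) (m : ℕ) (t : R) :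
    (hasseDeriv m (veronesePairing v)).eval t = N.choose m * (v ⬝ᵥ veroneseVec N t m) := by
  simp only [veronesePairing, map_sum, hasseDeriv_monomial, eval_finsetSum, eval_monomial,
    dotProduct, Finset.mul_sum, veroneseVec]
  refine Finset.sum_congr rfl fun i _ => ?_
  have hchoose : (N.choose i : R) * (N - i).choose m = N.choose m * (N - m).choose i := by
    exact_mod_cast congrArg (Nat.cast : ℕ → R) (choose_mul_choose_sub_comm N i m)
  calc ((N - i).choose m : R) * (v i * N.choose i) * t ^ (N - i - m)
      = v i * (N.choose i * (N - i).choose m) * t ^ (N - i - m) := by ring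
    _ = N.choose m * (v i * ((N - m).choose i * t ^ (N - m - i))) := by
      rw [hchoose, Nat.sub_right_comm]; ring

theorem eval_veronesePairing (v : Fin (N + 1) → R) (t : R) :
    (veronesePairing v).eval t = v ⬝ᵥ veroneseVec N t 0 := by
  simpa using eval_hasseDeriv_veronesePairing v 0 t

theorem natDegree_veronesePairing_le (v : Fin (N + 1) → R) : (veronesePairing v).natDegree ≤ N :=
  natDegree_sum_le_of_forall_le _ _ fun _ _ => (natDegree_monomial_le _).trans (Nat.sub_le _ _)

theorem coeff_veronesePairing (v : Fin (N + 1) → R) (i : Fin (N + 1)) :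
    (veronesePairing v).coeff (N - i) = v i * N.choose i := by
  rw [veronesePairing, finsetSum_coeff, Finset.sum_eq_single i]
  · rw [coeff_monomial_same]
  · intro j _ hji
    rw [coeff_monomial_of_ne]
    have := Fin.val_ne_of_ne hji
    omega
  · simp

theorem coeff_veronesePairing_self (v : Fin (N + 1) → R) : (veronesePairing v).coeff N = v 0 := by
  simpa using coeff_veronesePairing v 0

theorem eq_zero_of_veronesePairing_eq_zero [NoZeroDivisors R] [CharZero R] {v : Fin (N + 1) → R}
    (h : veronesePairing v = 0) : v = 0 := by
  funext i
  have hcoeff := coeff_veronesePairing v i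
  rw [h, coeff_zero] at hcoeff
  have hchoose : (N.choose i : R) ≠ 0 :=
    Nat.cast_ne_zero.mpr (Nat.choose_pos (Nat.lt_succ_iff.mp i.isLt)).ne'
  exact (mul_eq_zero.mp hcoeff.symm).resolve_right hchoose

end Pairing

section FlagMatrix

/-- The matrix with columns `u₁(s), …, u_k(s), u₁(t), …, u_{N-k}(t), x`, for `k ≤ N`, whose
determinant is `det[U_k(s), U_{N-k}(t), x]`. -/
def flagMatrix {R : Type*} [CommSemiring R] (N k : ℕ) (s t : R) (x : Fin (N + 1) → R) :
    Matrix (Fin (N + 1)) (Fin (N + 1)) R :=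
  of fun i j =>
    if (j : ℕ) < k then veroneseVec N s j i
    else if (j : ℕ) < N then veroneseVec N t (j - k) i
    else x i

section CommSemiring

variable {R : Type*} [CommSemiring R] {N k : ℕ} (s t : R) (x : Fin (N + 1) → R) {j : Fin (N + 1)}

theorem col_flagMatrix_of_lt (hj : (j : ℕ) < k) :
    (flagMatrix N k s t x).col j = veroneseVec N s j := by
  ext i
  simp [flagMatrix, hj]

theorem col_flagMatrix_of_le_of_lt (hkj : k ≤ j) (hj : (j : ℕ) < N) :
    (flagMatrix N k s t x).col j = veroneseVec N t (j - k) := by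
  ext i
  simp [flagMatrix, hkj, hj]

theorem col_flagMatrix_last (hk : k ≤ N) : (flagMatrix N k s t x).col (Fin.last N) = x := by
  ext i
  simp [flagMatrix, hk]

theorem updateCol_last_flagMatrix (hk : k ≤ N) (y : Fin (N + 1) → R) :
    (flagMatrix N k s t y).updateCol (Fin.last N) x = flagMatrix N k s t x := by
  ext i j
  rcases j.eq_castSucc_or_eq_last with ⟨j, rfl⟩ | rfl
  · simp [flagMatrix, (Fin.castSucc_lt_last j).ne]
  · simp [flagMatrix, hk]

end CommSemiring

variable {R : Type*} [CommRing R] {N k : ℕ} {s t : R}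

theorem det_flagMatrix_eq_dotProduct (hk : k ≤ N) (s t : R) (x y : Fin (N + 1) → R) :
    (flagMatrix N k s t x).det = (flagMatrix N k s t y).adjugate (Fin.last N) ⬝ᵥ x := by
  rw [← updateCol_last_flagMatrix s t x hk y, ← cramer_apply, cramer_eq_adjugate_mulVec]
  rfl

theorem veronesePairing_eq_of_vecMul_flagMatrix (hk : k ≤ N) (hst : IsUnit (s - t))
    {v x : Fin (N + 1) → R} (hv : ∀ j ≠ Fin.last N, (v ᵥ* flagMatrix N k s t x) j = 0) :
    veronesePairing v = C (v 0) * ((X - C s) ^ k * (X - C t) ^ (N - k)) := by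
  have hcol (j : Fin (N + 1)) (hj : (j : ℕ) < N) : v ⬝ᵥ (flagMatrix N k s t x).col j = 0 :=
    hv j (Fin.ne_of_val_ne hj.ne)
  have hs (m : ℕ) (hm : m < k) : v ⬝ᵥ veroneseVec N s m = 0 := by
    have hmN : m < N := hm.trans_le hk
    simpa [col_flagMatrix_of_lt, hm] using hcol ⟨m, hmN.trans N.lt_succ_self⟩ hmN
  have ht (m : ℕ) (hm : m < N - k) : v ⬝ᵥ veroneseVec N t m = 0 := by
    have hmN : k + m < N := by omega
    simpa [col_flagMatrix_of_le_of_lt, hmN] using hcol ⟨k + m, hmN.trans N.lt_succ_self⟩ hmN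
  rw [← coeff_veronesePairing_self v]
  refine eq_C_coeff_mul_X_sub_C_pow_mul hk hst (natDegree_veronesePairing_le v) ?_ ?_ <;>
    rw [X_sub_C_pow_dvd_iff_eval_hasseDeriv] <;> intro m hm
  · rw [eval_hasseDeriv_veronesePairing, hs m hm, mul_zero]
  · rw [eval_hasseDeriv_veronesePairing, ht m hm, mul_zero]

theorem det_flagMatrix_veroneseVec (hk : k ≤ N) (hst : IsUnit (s - t)) (b : R) :
    (flagMatrix N k s t (veroneseVec N b 0)).det =
      (flagMatrix N k s t (Pi.single 0 1)).det * ((b - s) ^ k * (b - t) ^ (N - k)) := by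
  set M := flagMatrix N k s t 0
  set v := M.adjugate (Fin.last N)
  have hdet (x) : (flagMatrix N k s t x).det = v ⬝ᵥ x := det_flagMatrix_eq_dotProduct hk s t x 0
  have hv : ∀ j ≠ Fin.last N, (v ᵥ* M) j = 0 := fun j hj =>
    calc (v ᵥ* M) j = (M.adjugate * M) (Fin.last N) j := rfl
      _ = 0 := by rw [adjugate_mul, Matrix.smul_apply, one_apply_ne hj.symm, smul_zero]
  rw [hdet, hdet, dotProduct_single_one, ← eval_veronesePairing,
    veronesePairing_eq_of_vecMul_flagMatrix hk hst hv]
  simp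

theorem det_flagMatrix_single_zero_ne_zero [IsDomain R] [CharZero R] (hk : k ≤ N)
    (hst : IsUnit (s - t)) : (flagMatrix N k s t (Pi.single 0 1)).det ≠ 0 := by
  intro hdet
  obtain ⟨v, hv_ne, hv⟩ := exists_vecMul_eq_zero_iff.mpr hdet
  have hv_zero : v 0 = 0 := by
    have hlast : v ⬝ᵥ (flagMatrix N k s t (Pi.single 0 1)).col (Fin.last N) = 0 :=
      congrFun hv (Fin.last N)
    rwa [col_flagMatrix_last s t _ hk, dotProduct_single_one] at hlast
  have hpairing := veronesePairing_eq_of_vecMul_flagMatrix hk hst fun j _ => congrFun hv j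
  rw [hv_zero, C_0, zero_mul] at hpairing
  exact hv_ne (eq_zero_of_veronesePairing_eq_zero hpairing)

theorem det_flagMatrix_veroneseVec_ne_zero [IsDomain R] [CharZero R] (hk : k ≤ N)
    (hst : IsUnit (s - t)) {b : R} (hbs : b ≠ s) (hbt : b ≠ t) :
    (flagMatrix N k s t (veroneseVec N b 0)).det ≠ 0 := by
  rw [det_flagMatrix_veroneseVec hk hst]
  exact mul_ne_zero (det_flagMatrix_single_zero_ne_zero hk hst)
    (mul_ne_zero (pow_ne_zero _ (sub_ne_zero.mpr hbs)) (pow_ne_zero _ (sub_ne_zero.mpr hbt)))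

end FlagMatrix

theorem veronese_double_ratio_general {K : Type*} [Field K] [CharZero K] {N p : ℕ} (hp : p < N)
    {a b c d : K} (hab : a ≠ b) (hac : a ≠ c) (had : a ≠ d) (hbc : b ≠ c) (hcd : c ≠ d) :
    ((flagMatrix N (p + 1) a c (veroneseVec N b 0)).det ≠ 0 ∧
      (flagMatrix N p a c (veroneseVec N d 0)).det ≠ 0 ∧
      (flagMatrix N (p + 1) a c (veroneseVec N d 0)).det ≠ 0 ∧
      (flagMatrix N p a c (veroneseVec N b 0)).det ≠ 0) ∧
    -(((flagMatrix N (p + 1) a c (veroneseVec N b 0)).det *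
          (flagMatrix N p a c (veroneseVec N d 0)).det) /
        ((flagMatrix N (p + 1) a c (veroneseVec N d 0)).det *
          (flagMatrix N p a c (veroneseVec N b 0)).det)) =
      -(((b - a) * (d - c)) / ((b - c) * (d - a))) := by
  have hunit : IsUnit (a - c) := (sub_ne_zero.mpr hac).isUnit
  have hne {k : ℕ} (hk : k ≤ N) {x : K} (hxa : x ≠ a) (hxc : x ≠ c) :=
    det_flagMatrix_veroneseVec_ne_zero hk hunit hxa hxc
  have hb_succ := hne hp hab.symm hbc
  have hd := hne hp.le had.symm hcd.symm
  have hd_succ := hne hp had.symm hcd.symm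
  have hb := hne hp.le hab.symm hbc
  refine ⟨⟨hb_succ, hd, hd_succ, hb⟩, ?_⟩
  rw [neg_inj, div_eq_div_iff (mul_ne_zero hd_succ hb)
    (mul_ne_zero (sub_ne_zero.mpr hbc) (sub_ne_zero.mpr had.symm))]
  have hsub : N - p = N - (p + 1) + 1 := by omega
  simp only [det_flagMatrix_veroneseVec hp hunit, det_flagMatrix_veroneseVec hp.le hunit, hsub,
    pow_succ]
  ring

theorem veroVec_succ (N : ℕ) (t : ℝ) (m : ℕ) : veroVec (N + 1) t m = veroneseVec N t m := by
  ext i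
  rw [veroVec, veroneseVec, Nat.add_sub_cancel, ite_eq_left_iff, not_le]
  intro hi
  rw [Nat.choose_eq_zero_of_lt hi, Nat.cast_zero, zero_mul]

theorem veroDet2_succ (N k : ℕ) (s t : ℝ) (x : Fin (N + 1) → ℝ) :
    veroDet2 (N + 1) k s t x = (flagMatrix N k s t x).det := by
  simp only [veroDet2, flagMatrix, veroVec_succ, Nat.add_sub_cancel]

/-- **Proposition 5.5.** For pairwise distinct `a, b, c, d ∈ ℝ` and `1 ≤ p ≤ n-1`,
the four determinants occurring in the `p`-th double ratio of the Veronese flags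
`ν(a), ν(c), ν(b), ν(d)` are nonzero, and the double ratio equals
`-((b-a)(d-c))/((b-c)(d-a))`, i.e. `-z⁻¹` for the cross ratio `z = z(c,d,a,b)`. -/
theorem veronese_double_ratio (n : ℕ) (hn : 2 ≤ n) (a b c d : ℝ)
    (hab : a ≠ b) (hac : a ≠ c) (had : a ≠ d) (hbc : b ≠ c) (hbd : b ≠ d) (hcd : c ≠ d)
    (p : ℕ) (hp1 : 1 ≤ p) (hp2 : p ≤ n - 1) :
    (veroDet2 n p a c (veroVec n b 0) ≠ 0 ∧
     veroDet2 n (p - 1) a c (veroVec n d 0) ≠ 0 ∧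
     veroDet2 n p a c (veroVec n d 0) ≠ 0 ∧
     veroDet2 n (p - 1) a c (veroVec n b 0) ≠ 0) ∧
    -((veroDet2 n p a c (veroVec n b 0) * veroDet2 n (p - 1) a c (veroVec n d 0)) /
        (veroDet2 n p a c (veroVec n d 0) * veroDet2 n (p - 1) a c (veroVec n b 0))) =
      -(((b - a) * (d - c)) / ((b - c) * (d - a))) := by
  obtain ⟨N, rfl⟩ : ∃ N, n = N + 1 := ⟨n - 1, by omega⟩
  obtain ⟨q, rfl⟩ : ∃ q, p = q + 1 := ⟨p - 1, by omega⟩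
  simpa only [veroDet2_succ, veroVec_succ, Nat.add_sub_cancel] using
    veronese_double_ratio_general (N := N) hp2 hab hac had hbc hcd
end

section
/- Let $n \geq 3$ and let $u, v, w : \{1,\dots,n\} \to \mathbb{R}^n$ be families of vectors such that $\Delta_{u,v,w}(d_1,d_2,d_3) \neq 0$ for all nonnegative integers $d_1, d_2, d_3$ with $d_1+d_2+d_3 = n$. Then for all integers $p, q, r \geq 1$ with $p+q+r = n$, the triple ratios satisfy $T_{pqr}(u,v,w) = T_{qrp}(v,w,u)$ and $T_{pqr}(u,v,w) = T_{qpr}(v,u,w)^{-1}$. -/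
/-- `tripleDelta n u v w d₁ d₂ d₃` is the determinant `Δ_{u,v,w}(d₁,d₂,d₃)` of the
`n × n` matrix whose columns are `u_1,…,u_{d₁}, v_1,…,v_{d₂}, w_1,…,w_{d₃}` in this
order (meaningful when `d₁ + d₂ + d₃ = n`). -/
def tripleDelta (n : ℕ) (u v w : Fin n → Fin n → ℝ) (d₁ d₂ d₃ : ℕ) : ℝ :=
  (Matrix.of fun i j : Fin n =>
    if (j : ℕ) < d₁ then u j i
    else if (j : ℕ) < d₁ + d₂ then
      v ⟨(j : ℕ) - d₁, Nat.lt_of_le_of_lt (Nat.sub_le _ _) j.isLt⟩ i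
    else
      w ⟨(j : ℕ) - d₁ - d₂,
        Nat.lt_of_le_of_lt (le_trans (Nat.sub_le _ _) (Nat.sub_le _ _)) j.isLt⟩ i).det

/-- The `(p,q,r)`-th triple ratio `T_{pqr}(u,v,w)` of three flags given by bases
`u`, `v`, `w`. -/
noncomputable def tripleRatio (n : ℕ) (u v w : Fin n → Fin n → ℝ) (p q r : ℕ) : ℝ :=
  (tripleDelta n u v w (p + 1) q (r - 1) * tripleDelta n u v w p (q - 1) (r + 1) *
      tripleDelta n u v w (p - 1) (q + 1) r) /
    (tripleDelta n u v w (p - 1) q (r + 1) * tripleDelta n u v w p (q + 1) (r - 1) *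
      tripleDelta n u v w (p + 1) (q - 1) r)

/-!
Exchanging adjacent blocks of `a` and `b` columns multiplies a determinant by `(-1) ^ (a * b)`.
Hence passing from `(u, v, w)` to `(v, w, u)` multiplies `Δ(d₁, d₂, d₃)` by
`(-1) ^ (d₁ * (d₂ + d₃))`, and passing to `(v, u, w)` multiplies it by `(-1) ^ (d₁ * d₂)`.
In the triple ratio the values of `d₁`, for fixed `d₁ + d₂ + d₃`, are `p - 1`, `p`, `p + 1` in both
numerator and denominator, so the signs of the first kind cancel; the exponents of the second kind
add up to `3 * p * q - 1` in both, while the two products trade places.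
-/

open Equiv

/-- The permutation of `Fin (a + b)` that moves the first `a` indices past the last `b`, that is,
`finAddFlip` read as a permutation. It encodes the exchange of two adjacent blocks. -/
def blockSwap (a b : ℕ) : Perm (Fin (a + b)) :=
  finAddFlip.trans (finCongr (add_comm b a))

theorem val_blockSwap_castAdd {a b : ℕ} (i : Fin a) :
    (blockSwap a b (i.castAdd b)).val = i + b := by
  simp [blockSwap, add_comm]

theorem val_blockSwap_natAdd {a b : ℕ} (i : Fin b) : (blockSwap a b (i.natAdd a)).val = i := by
  simp [blockSwap]

theorem val_finRotate_pow {n : ℕ} (k : ℕ) (i : Fin n) :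
    ((finRotate n ^ k) i).val = (i + k) % n := by
  have := i.neZero
  induction k with
  | zero => simp [Nat.mod_eq_of_lt i.isLt]
  | succ k ih => simp [pow_succ', Perm.mul_apply, finRotate_apply, Fin.val_add, ih, ← add_assoc]

theorem blockSwap_eq_finRotate_pow (a b : ℕ) : blockSwap a b = finRotate (a + b) ^ b := by
  ext i
  rw [val_finRotate_pow]
  induction i using Fin.addCases with
  | left i => rw [val_blockSwap_castAdd, Fin.val_castAdd, Nat.mod_eq_of_lt (by lia)]
  | right i =>
    rw [val_blockSwap_natAdd, Fin.val_natAdd, show a + i + b = i + (a + b) by ring,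
      Nat.add_mod_right, Nat.mod_eq_of_lt (by lia)]

theorem sign_blockSwap (a b : ℕ) : Perm.sign (blockSwap a b) = (-1) ^ (a * b) := by
  rw [blockSwap_eq_finRotate_pow, map_pow, sign_finRotate, ← pow_mul]
  apply neg_one_pow_congr
  grind

theorem det_swap_column_blocks {R : Type*} [CommRing R] {n a b : ℕ} (hab : a + b ≤ n)
    (M N : Matrix (Fin n) (Fin n) R)
    (hleft : ∀ i (j : Fin n) (hj : j < b), N i j = M i ⟨j + a, by lia⟩)
    (hright : ∀ i (j : Fin n), b ≤ j → j < a + b → N i j = M i ⟨j - b, by lia⟩)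
    (hrest : ∀ i (j : Fin n), a + b ≤ j → N i j = M i j) :
    N.det = (-1) ^ (a * b) * M.det := by
  obtain ⟨c, rfl⟩ : ∃ c, n = b + a + c := ⟨n - (b + a), by lia⟩
  let σ : Perm (Fin (b + a + c)) := finSumFinEquiv.permCongr (Perm.sumCongr (blockSwap b a) 1)
  have hsign : Perm.sign σ = (-1) ^ (a * b) := by
    rw [Perm.sign_permCongr, Perm.sign_sumCongr, sign_blockSwap, map_one, mul_one, mul_comm]
  have hN : N = M.submatrix id σ := by
    ext i j
    rw [Matrix.submatrix_apply, id]
    induction j using Fin.addCases with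
    | left j =>
      have hσ : (σ (j.castAdd c)).val = blockSwap b a j := by simp [σ]
      induction j using Fin.addCases with
      | left j =>
        rw [hleft _ _ (by simp)]
        exact congrArg (M i) (Fin.ext (by simp [hσ, val_blockSwap_castAdd]))
      | right j =>
        rw [hright _ _ (by simp) (by simp [add_comm a])]
        exact congrArg (M i) (Fin.ext (by simp [hσ, val_blockSwap_natAdd]))
    | right j =>
      rw [hrest _ _ (by simp [add_comm a])]
      simp [σ]
  rw [hN, Matrix.det_permute', hsign]
  simp

theorem tripleDelta_swap {n a b c : ℕ} (u v w : Fin n → Fin n → ℝ) (h : a + b + c = n) :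
    tripleDelta n v u w b a c = (-1) ^ (a * b) * tripleDelta n u v w a b c := by
  apply det_swap_column_blocks (a := a) (b := b) (by lia) <;> intros <;>
    simp only [Matrix.of_apply] <;> grind

theorem tripleDelta_rotate {n a b c : ℕ} (u v w : Fin n → Fin n → ℝ) (h : a + b + c = n) :
    tripleDelta n v w u b c a = (-1) ^ (a * (b + c)) * tripleDelta n u v w a b c := by
  apply det_swap_column_blocks (a := a) (b := b + c) (by lia) <;> intros <;>
    simp only [Matrix.of_apply] <;> grind

theorem tripleRatio_perm_general {n p q r : ℕ} (u v w : Fin n → Fin n → ℝ)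
    (hp : 1 ≤ p) (hq : 1 ≤ q) (hr : 1 ≤ r) (hpqr : p + q + r = n) :
    tripleRatio n u v w p q r = tripleRatio n v w u q r p ∧
      tripleRatio n u v w p q r = (tripleRatio n v u w q p r)⁻¹ := by
  obtain ⟨p, rfl⟩ := Nat.exists_eq_add_of_le' hp
  obtain ⟨q, rfl⟩ := Nat.exists_eq_add_of_le' hq
  obtain ⟨r, rfl⟩ := Nat.exists_eq_add_of_le' hr
  have sign_ne_zero (k : ℕ) : (-1 : ℝ) ^ k ≠ 0 := pow_ne_zero k (by norm_num)
  simp only [tripleRatio, Nat.add_sub_cancel]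
  constructor
  · simp (disch := lia) only [tripleDelta_rotate u v w]
    rw [← mul_div_mul_left _ _ (mul_ne_zero (mul_ne_zero (sign_ne_zero (p * (q + r + 3)))
      (sign_ne_zero ((p + 1) * (q + r + 2)))) (sign_ne_zero ((p + 2) * (q + r + 1))))]
    congr 1 <;> ring
  · simp (disch := lia) only [tripleDelta_swap u v w]
    rw [inv_div, ← mul_div_mul_left _ _ (sign_ne_zero (3 * (p * q + p + q) + 2))]
    congr 1 <;> ring

/-- **Proposition 4.2.** Behaviour of the triple ratio under permutation of a
generic flag triple: `T_{pqr}(u,v,w) = T_{qrp}(v,w,u) = T_{qpr}(v,u,w)⁻¹`. -/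
theorem tripleRatio_perm (n : ℕ) (hn : 3 ≤ n) (u v w : Fin n → Fin n → ℝ)
    (hgen : ∀ d₁ d₂ d₃ : ℕ, d₁ + d₂ + d₃ = n → tripleDelta n u v w d₁ d₂ d₃ ≠ 0) :
    ∀ p q r : ℕ, 1 ≤ p → 1 ≤ q → 1 ≤ r → p + q + r = n →
      tripleRatio n u v w p q r = tripleRatio n v w u q r p ∧
      tripleRatio n u v w p q r = (tripleRatio n v u w q p r)⁻¹ :=
  fun _ _ _ hp hq hr hpqr => tripleRatio_perm_general u v w hp hq hr hpqr
end

section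
/- Let $n \geq 3$ and let $u, v, w : \{1,\dots,n\} \to \mathbb{R}^n$ be families of vectors such that $\Delta_{u,v,w}(d_1,d_2,d_3) \neq 0$ for all nonnegative integers $d_1, d_2, d_3$ with $d_1+d_2+d_3 = n$. Suppose $u', v', w' : \{1,\dots,n\} \to \mathbb{R}^n$ are families with $u'_m = \sum_{j=1}^{m} \alpha_{mj} u_j$, $v'_m = \sum_{j=1}^{m} \beta_{mj} v_j$, $w'_m = \sum_{j=1}^{m} \gamma_{mj} w_j$ for real coefficients with $\alpha_{mm} \neq 0$, $\beta_{mm} \neq 0$, $\gamma_{mm} \neq 0$ for all $m$. Then for all integers $p, q, r \geq 1$ with $p+q+r = n$, $T_{pqr}(u',v',w') = T_{pqr}(u,v,w)$ (and the nonvanishing hypothesis holds for $(u',v',w')$ as well). -/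
/-!
`Δ(d₁, d₂, d₃)` is, up to transposition, the determinant of the first `d₁`, `d₂` and `d₃` vectors of
the three families stacked as rows. A triangular change of the families multiplies this stack on
the left by a block diagonal matrix with triangular blocks, so it multiplies `Δ(d₁, d₂, d₃)` by
`A d₁ * B d₂ * C d₃`, where `A d`, `B d`, `C d` are the products of the first `d` diagonal
coefficients. In the triple ratio, the first argument runs through `p - 1, p, p + 1` in the
numerator and in the denominator alike, and similarly for the other two, so all the factors cancel.
-/

section TriangularChange

variable {R ι : Type*} {d n : ℕ}

/-- The matrix whose rows are the first `d` vectors of the family `u`, which span the `d`-th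
subspace of its flag. -/
def leadingRows (h : d ≤ n) (u : Fin n → ι → R) : Matrix (Fin d) ι R :=
  Matrix.of fun i => u (Fin.castLE h i)

/-- The lower triangular part of the leading `d × d` block of `α`: the matrix of a triangular change
of basis on the `d`-th subspace of a flag. The entries of `α` above the diagonal, which such a
change does not involve, are replaced by `0`. -/
def leadingLowerBlock [Zero R] (h : d ≤ n) (α : Fin n → Fin n → R) : Matrix (Fin d) (Fin d) R :=
  Matrix.of fun i j => if j ≤ i then α (Fin.castLE h i) (Fin.castLE h j) else 0

/-- The product of the first `d` diagonal coefficients of `α` (of all of them if `n ≤ d`), the factor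
by which `α` rescales the wedge product of the first `d` vectors of a family. -/
def leadingDiagProd [CommMonoid R] (α : Fin n → Fin n → R) (d : ℕ) : R :=
  ∏ m with m.val < d, α m m

theorem leadingDiagProd_ne_zero [CommMonoidWithZero R] [Nontrivial R] [NoZeroDivisors R]
    {α : Fin n → Fin n → R} (hα : ∀ m, α m m ≠ 0) (d : ℕ) : leadingDiagProd α d ≠ 0 :=
  Finset.prod_ne_zero_iff.2 fun m _ => hα m

theorem prod_castLE_eq_leadingDiagProd [CommMonoid R] (h : d ≤ n) (α : Fin n → Fin n → R) :
    ∏ i : Fin d, α (Fin.castLE h i) (Fin.castLE h i) = leadingDiagProd α d := by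
  have himage : (Finset.univ : Finset (Fin d)).map (Fin.castLEEmb h) =
      Finset.univ.filter fun m => m.val < d := by
    ext m
    simp only [Finset.mem_map, Finset.mem_univ, true_and, Finset.mem_filter]
    exact ⟨fun ⟨i, hi⟩ => hi ▸ i.isLt, fun hm => ⟨⟨m, hm⟩, rfl⟩⟩
  rw [leadingDiagProd, ← himage, Finset.prod_map]
  rfl

theorem det_leadingLowerBlock [CommRing R] (h : d ≤ n) (α : Fin n → Fin n → R) :
    (leadingLowerBlock h α).det = leadingDiagProd α d := by
  have hlower : (leadingLowerBlock h α).IsLowerTriangular := fun _ _ hij => if_neg (not_le.2 hij)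
  rw [Matrix.det_of_isLowerTriangular _ hlower, ← prod_castLE_eq_leadingDiagProd h]
  exact Finset.prod_congr rfl fun _ _ => if_pos le_rfl

theorem leadingRows_eq_leadingLowerBlock_mul [NonUnitalNonAssocSemiring R] (h : d ≤ n)
    {u u' : Fin n → ι → R} {α : Fin n → Fin n → R}
    (hu' : ∀ m, u' m = ∑ j ∈ Finset.Iic m, α m j • u j) :
    leadingRows h u' = leadingLowerBlock h α * leadingRows h u := by
  ext i x
  calc u' (Fin.castLE h i) x
      = ∑ j ∈ Finset.Iic (Fin.castLE h i), α (Fin.castLE h i) j * u j x := by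
        simp only [hu', Finset.sum_apply, Pi.smul_apply, smul_eq_mul]
    _ = ∑ j ∈ Finset.Iic i, α (Fin.castLE h i) (Fin.castLE h j) * u (Fin.castLE h j) x := by
        rw [← Fin.map_castLEEmb_Iic, Finset.sum_map]
        rfl
    _ = (leadingLowerBlock h α * leadingRows h u) i x := by
        simp only [Matrix.mul_apply, leadingLowerBlock, leadingRows, Matrix.of_apply, ite_mul,
          zero_mul, ← Finset.sum_filter, Finset.filter_ge_eq_Iic]

end TriangularChange

theorem det_submatrix_fromRows_mul {R k m₁ m₂ m₃ : Type*} [CommRing R] [Fintype k] [DecidableEq k]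
    [Fintype m₁] [DecidableEq m₁] [Fintype m₂] [DecidableEq m₂] [Fintype m₃] [DecidableEq m₃]
    (e : k ≃ (m₁ ⊕ m₂) ⊕ m₃) (A : Matrix m₁ m₁ R) (B : Matrix m₂ m₂ R) (C : Matrix m₃ m₃ R)
    (U : Matrix m₁ k R) (V : Matrix m₂ k R) (W : Matrix m₃ k R) :
    (((A * U).fromRows (B * V)).fromRows (C * W) |>.submatrix e id).det =
      A.det * B.det * C.det * ((U.fromRows V).fromRows W |>.submatrix e id).det := by
  have hblock : ((A * U).fromRows (B * V)).fromRows (C * W) =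
      Matrix.fromBlocks (Matrix.fromBlocks A 0 0 B) 0 0 C * (U.fromRows V).fromRows W := by
    simp only [Matrix.fromBlocks_mul_fromRows, Matrix.zero_mul, add_zero, zero_add]
  rw [hblock, ← Matrix.submatrix_mul_equiv _ _ e e id, Matrix.det_mul,
    Matrix.det_submatrix_equiv_self, Matrix.det_fromBlocks_zero₂₁, Matrix.det_fromBlocks_zero₂₁]

/-- The splitting of `n = d₁ + d₂ + d₃` indices into three consecutive blocks, used to view the
columns in `tripleDelta` as three separate families. -/
def finBlockEquiv {n d₁ d₂ d₃ : ℕ} (h : d₁ + d₂ + d₃ = n) :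
    Fin n ≃ (Fin d₁ ⊕ Fin d₂) ⊕ Fin d₃ :=
  (finCongr h.symm).trans
    (finSumFinEquiv.symm.trans (finSumFinEquiv.symm.sumCongr (Equiv.refl (Fin d₃))))

theorem tripleDelta_eq_det_fromRows {n d₁ d₂ d₃ : ℕ} (u v w : Fin n → Fin n → ℝ)
    (h : d₁ + d₂ + d₃ = n) (h₁ : d₁ ≤ n) (h₂ : d₂ ≤ n) (h₃ : d₃ ≤ n) :
    tripleDelta n u v w d₁ d₂ d₃ =
      (((leadingRows h₁ u).fromRows (leadingRows h₂ v)).fromRows (leadingRows h₃ w) |>.submatrix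
        (finBlockEquiv h) id).det := by
  rw [tripleDelta, ← Matrix.det_transpose]
  congr 1
  ext j i
  obtain ⟨b, rfl⟩ := (finBlockEquiv h).symm.surjective j
  subst h
  rcases b with (a | b) | c
  · have ha : Fin.castLE h₁ a = Fin.castAdd d₃ (Fin.castAdd d₂ a) := rfl
    simp [finBlockEquiv, leadingRows, ha]
  · simp [finBlockEquiv, leadingRows, Fin.castLE]
  · have hc : ¬ d₁ + d₂ + (c : ℕ) < d₁ := by lia
    simp [finBlockEquiv, leadingRows, Fin.castLE, Nat.sub_sub, hc]

theorem tripleDelta_of_triangular_change {n : ℕ} {u v w u' v' w' α β γ : Fin n → Fin n → ℝ}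
    (hu' : ∀ m, u' m = ∑ j ∈ Finset.Iic m, α m j • u j)
    (hv' : ∀ m, v' m = ∑ j ∈ Finset.Iic m, β m j • v j)
    (hw' : ∀ m, w' m = ∑ j ∈ Finset.Iic m, γ m j • w j)
    {d₁ d₂ d₃ : ℕ} (h : d₁ + d₂ + d₃ = n) :
    tripleDelta n u' v' w' d₁ d₂ d₃ =
      leadingDiagProd α d₁ * leadingDiagProd β d₂ * leadingDiagProd γ d₃ *
        tripleDelta n u v w d₁ d₂ d₃ := by
  have h₁ : d₁ ≤ n := by lia
  have h₂ : d₂ ≤ n := by lia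
  have h₃ : d₃ ≤ n := by lia
  simp only [tripleDelta_eq_det_fromRows _ _ _ h h₁ h₂ h₃,
    leadingRows_eq_leadingLowerBlock_mul _ hu', leadingRows_eq_leadingLowerBlock_mul _ hv',
    leadingRows_eq_leadingLowerBlock_mul _ hw', det_submatrix_fromRows_mul, det_leadingLowerBlock]

theorem tripleRatio_eq_of_tripleDelta_rescaling {n : ℕ} {u v w u' v' w' : Fin n → Fin n → ℝ}
    {A B C : ℕ → ℝ} (hA : ∀ d, A d ≠ 0) (hB : ∀ d, B d ≠ 0) (hC : ∀ d, C d ≠ 0)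
    (hΔ : ∀ d₁ d₂ d₃ : ℕ, d₁ + d₂ + d₃ = n →
      tripleDelta n u' v' w' d₁ d₂ d₃ = A d₁ * B d₂ * C d₃ * tripleDelta n u v w d₁ d₂ d₃)
    {p q r : ℕ} (hp : 1 ≤ p) (hq : 1 ≤ q) (hr : 1 ≤ r) (h : p + q + r = n) :
    tripleRatio n u' v' w' p q r = tripleRatio n u v w p q r := by
  let scale := (A (p - 1) * A p * A (p + 1)) * (B (q - 1) * B q * B (q + 1)) *
    (C (r - 1) * C r * C (r + 1))
  have hscale : scale ≠ 0 := by simp [scale, hA, hB, hC]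
  calc tripleRatio n u' v' w' p q r
      = (scale * (tripleDelta n u v w (p + 1) q (r - 1) * tripleDelta n u v w p (q - 1) (r + 1) *
            tripleDelta n u v w (p - 1) (q + 1) r)) /
          (scale * (tripleDelta n u v w (p - 1) q (r + 1) * tripleDelta n u v w p (q + 1) (r - 1) *
            tripleDelta n u v w (p + 1) (q - 1) r)) := by
        rw [tripleRatio, hΔ (p + 1) q (r - 1) (by lia), hΔ p (q - 1) (r + 1) (by lia),
          hΔ (p - 1) (q + 1) r (by lia), hΔ (p - 1) q (r + 1) (by lia),
          hΔ p (q + 1) (r - 1) (by lia), hΔ (p + 1) (q - 1) r (by lia)]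
        congr 1 <;> ring
    _ = tripleRatio n u v w p q r := mul_div_mul_left _ _ hscale

/-- The triple ratio is independent of the choice of bases adapted to the flags
(Section 4.1): triangular changes of basis with nonzero diagonal coefficients
leave all triple ratios unchanged, and preserve genericity. -/
theorem tripleRatio_basis_independent (n : ℕ) (hn : 3 ≤ n)
    (u v w u' v' w' : Fin n → Fin n → ℝ)
    (hgen : ∀ d₁ d₂ d₃ : ℕ, d₁ + d₂ + d₃ = n → tripleDelta n u v w d₁ d₂ d₃ ≠ 0)
    (α β γ : Fin n → Fin n → ℝ)
    (hα : ∀ m, α m m ≠ 0) (hβ : ∀ m, β m m ≠ 0) (hγ : ∀ m, γ m m ≠ 0)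
    (hu' : ∀ m, u' m = ∑ j ∈ Finset.Iic m, α m j • u j)
    (hv' : ∀ m, v' m = ∑ j ∈ Finset.Iic m, β m j • v j)
    (hw' : ∀ m, w' m = ∑ j ∈ Finset.Iic m, γ m j • w j) :
    (∀ d₁ d₂ d₃ : ℕ, d₁ + d₂ + d₃ = n → tripleDelta n u' v' w' d₁ d₂ d₃ ≠ 0) ∧
    ∀ p q r : ℕ, 1 ≤ p → 1 ≤ q → 1 ≤ r → p + q + r = n →
      tripleRatio n u' v' w' p q r = tripleRatio n u v w p q r := by
  have hA := leadingDiagProd_ne_zero hα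
  have hB := leadingDiagProd_ne_zero hβ
  have hC := leadingDiagProd_ne_zero hγ
  have hΔ (d₁ d₂ d₃ : ℕ) (h : d₁ + d₂ + d₃ = n) := tripleDelta_of_triangular_change hu' hv' hw' h
  refine ⟨fun d₁ d₂ d₃ h => ?_, fun p q r hp hq hr h =>
    tripleRatio_eq_of_tripleDelta_rescaling hA hB hC hΔ hp hq hr h⟩
  rw [hΔ d₁ d₂ d₃ h]
  exact mul_ne_zero (mul_ne_zero (mul_ne_zero (hA d₁) (hB d₂)) (hC d₃)) (hgen d₁ d₂ d₃ h)
end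

section
/- Let $n \geq 2$ and $1 \leq p \leq n-1$. Let $u, v : \{1,\dots,n\} \to \mathbb{R}^n$ be families of vectors and $g, g' \in \mathbb{R}^n$ be vectors such that the four determinants occurring in $D_p(u,v,g,g')$ are nonzero. Suppose $u'_m = \sum_{j=1}^{m} \alpha_{mj} u_j$ and $v'_m = \sum_{j=1}^{m} \beta_{mj} v_j$ with $\alpha_{mm} \neq 0$ and $\beta_{mm} \neq 0$ for all $m$, and let $\lambda, \mu \in \mathbb{R}$ be nonzero. Then $D_p(u', v', \lambda g, \mu g') = D_p(u,v,g,g')$. -/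
/-- `doubleDet n u v a x` is the determinant of the `n × n` matrix with columns
`u_1,…,u_a, v_1,…,v_{n-1-a}, x` in this order. -/
def doubleDet (n : ℕ) (u v : Fin n → Fin n → ℝ) (a : ℕ) (x : Fin n → ℝ) : ℝ :=
  (Matrix.of fun i j : Fin n =>
    if (j : ℕ) < a then u j i
    else if (j : ℕ) < n - 1 then
      v ⟨(j : ℕ) - a, Nat.lt_of_le_of_lt (Nat.sub_le _ _) j.isLt⟩ i
    else x i).det

/-- The `p`-th double ratio
`D_p(u,v,g,g') = -(det[u₁,…,u_p,v₁,…,v_{n-p-1},g]·det[u₁,…,u_{p-1},v₁,…,v_{n-p},g']) /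
(det[u₁,…,u_p,v₁,…,v_{n-p-1},g']·det[u₁,…,u_{p-1},v₁,…,v_{n-p},g])`. -/
noncomputable def doubleRatio (n : ℕ) (u v : Fin n → Fin n → ℝ) (g g' : Fin n → ℝ)
    (p : ℕ) : ℝ :=
  -((doubleDet n u v p g * doubleDet n u v (p - 1) g') /
    (doubleDet n u v p g' * doubleDet n u v (p - 1) g))

/-!
Modulo the span of the preceding columns, a triangular change of `u` and `v` multiplies each column
of `u_1,…,u_a, v_1,…,v_{n-1-a}, g` by a diagonal coefficient, and rescaling `g` multiplies the last
column. Hence each determinant is multiplied by a factor depending only on `a` times the scaling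
factor of its last column, and each of these factors occurs once in the numerator and once in the
denominator of the ratio.
-/

/-- The family `w'` arises from `w` by a triangular change with diagonal coefficients `c`: each
`w' j` is `c j • w j` up to a combination of the earlier `w k`. For nonvanishing `c` over a field
this implies that `w` and `w'` span the same flag. -/
def IsTriangularChange {ι R M : Type*} [Preorder ι] [Ring R] [AddCommGroup M] [Module R M]
    (c : ι → R) (w w' : ι → M) : Prop :=
  ∀ j, w' j - c j • w j ∈ Submodule.span R (w '' Set.Iio j)

theorem isTriangularChange_of_eq_sum_Iic {ι R M : Type*} [PartialOrder ι]
    [LocallyFiniteOrderBot ι] [Ring R] [AddCommGroup M] [Module R M] {A : ι → ι → R}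
    {w w' : ι → M} (h : ∀ m, w' m = ∑ j ∈ Finset.Iic m, A m j • w j) :
    IsTriangularChange (fun m => A m m) w w' := by
  intro m
  rw [h, Finset.Iic_eq_cons_Iio, Finset.sum_cons, add_sub_cancel_left]
  exact Submodule.sum_smul_mem _ _ fun j hj =>
    Submodule.subset_span (Set.mem_image_of_mem w (Finset.mem_Iio.mp hj))

theorem alternatingMap_update_eq_zero_of_mem_span {ι R M N : Type*} [DecidableEq ι] [Semiring R]
    [AddCommMonoid M] [Module R M] [AddCommMonoid N] [Module R N] (f : M [⋀^ι]→ₗ[R] N)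
    (w : ι → M) {j : ι} {s : Set ι} (hj : j ∉ s) {x : M} (hx : x ∈ Submodule.span R (w '' s)) :
    f (Function.update w j x) = 0 := by
  have span_le_ker : Submodule.span R (w '' s) ≤ (f.toMultilinearMap.toLinearMap w j).ker := by
    rw [Submodule.span_le]
    rintro _ ⟨k, hk, rfl⟩
    exact f.map_update_self w (ne_of_mem_of_not_mem hk hj).symm
  exact span_le_ker hx

theorem IsTriangularChange.alternatingMap_eq {ι R M N : Type*} [LinearOrder ι] [Fintype ι]
    [CommRing R] [AddCommGroup M] [Module R M] [AddCommMonoid N] [Module R N] (f : M [⋀^ι]→ₗ[R] N)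
    {c : ι → R} {w w' : ι → M} (h : IsTriangularChange c w w') :
    f w' = (∏ j, c j) • f w := by
  -- Replacing the vectors from the last to the first keeps the earlier ones equal to those of `w`.
  suffices ∀ s : Finset ι, f (s.piecewise w' w) = (∏ j ∈ s, c j) • f w by
    simpa only [Finset.piecewise_univ] using this Finset.univ
  intro s
  induction s using Finset.induction_on_min with
  | empty => simp only [Finset.piecewise_empty, Finset.prod_empty, one_smul]
  | insert a s ha ih =>
    have a_notMem : a ∉ s := fun has => (ha a has).false
    have below_eq : s.piecewise w' w '' Set.Iio a = w '' Set.Iio a :=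
      Set.image_congr fun k hk =>
        Finset.piecewise_eq_of_notMem _ _ _ fun hks => (ha k hks).not_gt hk
    have lower_part_eq_zero :
        f (Function.update (s.piecewise w' w) a (w' a - c a • w a)) = 0 :=
      alternatingMap_update_eq_zero_of_mem_span f _ Set.self_notMem_Iio (below_eq ▸ h a)
    calc f ((insert a s).piecewise w' w)
        = f (Function.update (s.piecewise w' w) a (c a • w a + (w' a - c a • w a))) := by
          rw [Finset.piecewise_insert, add_sub_cancel]
      _ = c a • f (Function.update (s.piecewise w' w) a (w a)) := by
          rw [f.map_update_add, lower_part_eq_zero, add_zero, f.map_update_smul]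
      _ = c a • f (s.piecewise w' w) := by
          rw [← Finset.piecewise_eq_of_notMem s w' w a_notMem, Function.update_eq_self]
      _ = (∏ j ∈ insert a s, c j) • f w := by
          rw [ih, smul_smul, Finset.prod_insert a_notMem]

/-- The family `u_1,…,u_a, v_1,…,v_{n-1-a}, x` of length `n` whose determinant is `doubleDet`. It is
also used for families of scalars, to record diagonal coefficients. If `n ≤ a`, then `x` does not
occur. -/
def splice {n : ℕ} {M : Type*} (u v : Fin n → M) (a : ℕ) (x : M) (j : Fin n) : M :=
  if (j : ℕ) < a then u j
  else if (j : ℕ) < n - 1 then v ⟨(j : ℕ) - a, Nat.lt_of_le_of_lt (Nat.sub_le _ _) j.isLt⟩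
  else x

section Splice

variable {n : ℕ} {M : Type*}

theorem splice_eq_update (u v : Fin n → M) {a : ℕ} (ha : a < n) (x y : M) :
    splice u v a x =
      Function.update (splice u v a y) ⟨n - 1, Nat.sub_one_lt_of_lt ha⟩ x := by
  ext j
  simp only [splice, Function.update_apply, Fin.ext_iff]
  split_ifs <;> first | rfl | omega

theorem alternatingMap_splice_smul {R N : Type*} [Semiring R] [AddCommMonoid M] [Module R M]
    [AddCommMonoid N] [Module R N] (f : M [⋀^Fin n]→ₗ[R] N) (u v : Fin n → M) {a : ℕ} (ha : a < n)
    (t : R) (x : M) : f (splice u v a (t • x)) = t • f (splice u v a x) := by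
  rw [splice_eq_update u v ha (t • x) x, f.map_update_smul, ← splice_eq_update u v ha]

theorem prod_splice_one_ne_zero {K : Type*} [CommMonoidWithZero K] [NoZeroDivisors K] [Nontrivial K]
    {c d : Fin n → K} (hc : ∀ m, c m ≠ 0) (hd : ∀ m, d m ≠ 0) (a : ℕ) :
    ∏ j, splice c d a 1 j ≠ 0 := by
  refine Finset.prod_ne_zero_iff.mpr fun j _ => ?_
  unfold splice
  split_ifs
  exacts [hc _, hd _, one_ne_zero]

protected theorem IsTriangularChange.splice {R : Type*} [Ring R] [AddCommGroup M] [Module R M]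
    {c d : Fin n → R} {u v u' v' : Fin n → M} (hu : IsTriangularChange c u u')
    (hv : IsTriangularChange d v v') (a : ℕ) (x : M) :
    IsTriangularChange (splice c d a 1) (splice u v a x) (splice u' v' a x) := by
  intro j
  by_cases hja : (j : ℕ) < a
  · have u_subset : u '' Set.Iio j ⊆ splice u v a x '' Set.Iio j := by
      rintro _ ⟨k, hk, rfl⟩
      exact ⟨k, hk, if_pos (lt_trans hk hja)⟩
    simpa only [splice, hja, if_true] using Submodule.span_mono u_subset (hu j)
  by_cases hjn : (j : ℕ) < n - 1
  · let i : Fin n := ⟨j - a, by omega⟩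
    have v_subset : v '' Set.Iio i ⊆ splice u v a x '' Set.Iio j := by
      rintro _ ⟨k, hk, rfl⟩
      have hkj : (k : ℕ) < j - a := hk
      refine ⟨⟨k + a, by omega⟩, Fin.lt_def.mpr (by dsimp only; omega), ?_⟩
      have hkn : (k : ℕ) + a < n - 1 := by omega
      simp [splice, hkn]
    simpa only [splice, hja, hjn, if_true, if_false] using
      Submodule.span_mono v_subset (hv i)
  · simp [splice, hja, hjn]

end Splice

/-- The double ratio formed with an alternating form `ω` in place of the determinant and with
arbitrary numbers `a`, `b` of vectors taken from `u`. The `p`-th double ratio is the case `a = p`,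
`b = p - 1`. -/
noncomputable def alternatingRatio {n : ℕ} {K V : Type*} [Field K] [AddCommGroup V] [Module K V]
    (ω : V [⋀^Fin n]→ₗ[K] K) (u v : Fin n → V) (g g' : V) (a b : ℕ) : K :=
  -((ω (splice u v a g) * ω (splice u v b g')) / (ω (splice u v a g') * ω (splice u v b g)))

theorem doubleDet_eq_detRowAlternating (n : ℕ) (u v : Fin n → Fin n → ℝ) (a : ℕ)
    (x : Fin n → ℝ) : doubleDet n u v a x = Matrix.detRowAlternating (splice u v a x) := by
  rw [doubleDet, ← Matrix.det_transpose]
  congr 1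
  ext j i
  simp only [Matrix.transpose_apply, Matrix.of_apply, splice]
  split_ifs <;> rfl

theorem doubleRatio_eq_alternatingRatio (n : ℕ) (u v : Fin n → Fin n → ℝ) (g g' : Fin n → ℝ)
    (p : ℕ) : doubleRatio n u v g g' p =
      alternatingRatio Matrix.detRowAlternating u v g g' p (p - 1) := by
  simp only [doubleRatio, alternatingRatio, doubleDet_eq_detRowAlternating]

theorem doubleRatio_basis_independent_general {n : ℕ} {K V : Type*} [Field K] [AddCommGroup V]
    [Module K V] (ω : V [⋀^Fin n]→ₗ[K] K) {u v u' v' : Fin n → V} {g g' : V} {a b : ℕ}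
    (ha : a < n) (hb : b < n) (hωa : ω (splice u v a g') ≠ 0) (hωb : ω (splice u v b g) ≠ 0)
    {c d : Fin n → K} (hc : ∀ m, c m ≠ 0) (hd : ∀ m, d m ≠ 0)
    (hu : IsTriangularChange c u u') (hv : IsTriangularChange d v v')
    {s t : K} (hs : s ≠ 0) (ht : t ≠ 0) :
    alternatingRatio ω u' v' (s • g) (t • g') a b = alternatingRatio ω u v g g' a b := by
  have transform {e : ℕ} (he : e < n) (r : K) (x : V) :
      ω (splice u' v' e (r • x)) = r * ((∏ j, splice c d e 1 j) * ω (splice u v e x)) := by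
    rw [alternatingMap_splice_smul ω u' v' he, (hu.splice hv e x).alternatingMap_eq, smul_eq_mul,
      smul_eq_mul]
  have factor_ne_zero := prod_splice_one_ne_zero hc hd
  simp only [alternatingRatio, transform ha, transform hb]
  rw [neg_inj, div_eq_div_iff
    (mul_ne_zero (mul_ne_zero ht (mul_ne_zero (factor_ne_zero a) hωa))
      (mul_ne_zero hs (mul_ne_zero (factor_ne_zero b) hωb)))
    (mul_ne_zero hωa hωb)]
  ring

/-- The double ratio is well-defined (Section 4.1): it is unchanged under
triangular changes of the adapted bases `u`, `v` with nonzero diagonal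
coefficients and under rescaling of the vectors `g`, `g'`. -/
theorem doubleRatio_basis_independent (n : ℕ) (hn : 2 ≤ n) (p : ℕ) (hp1 : 1 ≤ p)
    (hp2 : p ≤ n - 1) (u v u' v' : Fin n → Fin n → ℝ) (g g' : Fin n → ℝ)
    (h1 : doubleDet n u v p g ≠ 0) (h2 : doubleDet n u v (p - 1) g' ≠ 0)
    (h3 : doubleDet n u v p g' ≠ 0) (h4 : doubleDet n u v (p - 1) g ≠ 0)
    (α β : Fin n → Fin n → ℝ) (hα : ∀ m, α m m ≠ 0) (hβ : ∀ m, β m m ≠ 0)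
    (hu' : ∀ m, u' m = ∑ j ∈ Finset.Iic m, α m j • u j)
    (hv' : ∀ m, v' m = ∑ j ∈ Finset.Iic m, β m j • v j)
    (lam mu : ℝ) (hlam : lam ≠ 0) (hmu : mu ≠ 0) :
    doubleRatio n u' v' (lam • g) (mu • g') p = doubleRatio n u v g g' p := by
  simp only [doubleDet_eq_detRowAlternating] at h3 h4
  simpa only [doubleRatio_eq_alternatingRatio] using
    doubleRatio_basis_independent_general Matrix.detRowAlternating (by omega) (by omega) h3 h4 hα hβ
      (isTriangularChange_of_eq_sum_Iic hu') (isTriangularChange_of_eq_sum_Iic hv') hlam hmu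
end
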